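/- arXiv:math/0409554 — 2 statements merged into one kernel-verified Lean document; each statement's English description precedes it below -/
import Mathlib

section
/- Fix integers 1 ≤ p ≤ q and k ≥ 0. Then lim_{n→∞} n^{(p²−1)/2} · E^{p(n−p)+k, p}( 1_{λ⊇μ} · H(λ) ) = ( √p · ∏_{j=1}^p (q−j)! ) / ( (2π)^{(p−1)/2} · k! ) · E( (½ Z_{2pq})^k ), where μ = (n−p)^p and H is the strip hook product (both depending on n). Equivalently, E^{p(n−p)+k,p}(1_{λ⊇μ} H(λ)) ∼ c_{p,q,k} · n^{−(p²−1)/2} as n → ∞, with c_{p,q,k} = ( √p ∏_{j=1}^p (q−j)! / (2π)^{(p−1)/2} ) · binom(pq−1+k, k). -/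
open MeasureTheory Filter Real
open scoped BigOperators Topology

noncomputable section

/-- Hook length of the (0-indexed) cell `c` in the Young diagram `μ`. -/
def hookLen (μ : YoungDiagram) (c : ℕ × ℕ) : ℕ :=
  μ.rowLen c.1 + μ.colLen c.2 - c.1 - c.2 - 1

/-- Product of all hook lengths of `μ`. -/
def hookProd (μ : YoungDiagram) : ℕ := ∏ c ∈ μ.cells, hookLen μ c

/-- Number of semistandard Young tableaux of shape `μ` with entries in `{0, …, q-1}`. -/
def numSSYT (μ : YoungDiagram) (q : ℕ) : ℕ :=
  Set.ncard {T : SemistandardYoungTableau μ | ∀ c ∈ μ.cells, T c.1 c.2 < q}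

/-- Number of standard Young tableaux of shape `μ`, via the hook length formula. -/
def fSYT (μ : YoungDiagram) : ℝ := (Nat.factorial μ.card : ℝ) / (hookProd μ : ℝ)

/-- The probability `P^{ℓ,p}` of a partition `μ` of `ℓ`. -/
def Pword (ℓ p : ℕ) (μ : YoungDiagram) : ℝ :=
  fSYT μ * (numSSYT μ p : ℝ) / (p : ℝ) ^ ℓ

/-- The expectation `E^{ℓ,p}` of a function `g` of the partition. -/
def Eword (ℓ p : ℕ) (g : YoungDiagram → ℝ) : ℝ :=
  ∑' μ : YoungDiagram, if μ.card = ℓ then Pword ℓ p μ * g μ else 0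

/-- The expectation `E_{x,p}` with respect to the Poissonized measure `P_{x,p}`. -/
def Epois (x : ℝ) (p : ℕ) (g : YoungDiagram → ℝ) : ℝ :=
  ∑' μ : YoungDiagram,
    Real.exp (-(p * x)) * (p * x) ^ μ.card / (Nat.factorial μ.card : ℝ) *
      Pword μ.card p μ * g μ

/-- Pochhammer symbol `(x)_m = x (x+1) ⋯ (x+m-1)`. -/
def pochRe (x : ℝ) (m : ℕ) : ℝ := ∏ j ∈ Finset.range m, (x + j)

/-- `(x)_κ = ∏_i (x + 1 - i)_{κ_i}` (with `i` 1-indexed). -/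
def pochPart (x : ℝ) (μ : YoungDiagram) : ℝ :=
  ∏ i ∈ Finset.range (μ.colLen 0), pochRe (x - i) (μ.rowLen i)

/-- Strip hook product `H(λ) = ∏_{(i,j) ∈ λ, n-q < j ≤ n-p} h^λ_{ij}` (1-indexed `j`). -/
def Hstrip (n p q : ℕ) (μ : YoungDiagram) : ℕ :=
  ∏ c ∈ μ.cells.filter (fun c => n - q ≤ c.2 ∧ c.2 < n - p), hookLen μ c

/-- The indicator `1_{λ ⊇ (n-p)^p}`. -/
def indSup (n p : ℕ) (μ : YoungDiagram) : ℝ :=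
  if ∀ i < p, n - p ≤ μ.rowLen i then 1 else 0

/-- Vandermonde determinant `Δ_p(x) = ∏_{i<j} (x_i - x_j)`. -/
def vdm {p : ℕ} (x : Fin p → ℝ) : ℝ :=
  ∏ i : Fin p, ∏ j ∈ Finset.Ioi i, (x i - x j)

/-- The `k`-th moment `E((½ Z_m)^k)` of half a chi-square variable with `m`
degrees of freedom, `Z_m = X₁² + ⋯ + X_m²` for iid standard normals. -/
def chiHalfMoment (m k : ℕ) : ℝ :=
  ∫ x : Fin m → ℝ, ((∑ i, x i ^ 2) / 2) ^ k
    ∂(MeasureTheory.Measure.pi fun _ : Fin m => ProbabilityTheory.gaussianReal 0 1)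

/-!
By the hook content formula the strip hook product cancels against `f^λ`. Writing
`λ = (n - p)^p + ν` with `ν` a partition of `k`, the expectation becomes a sum over `ν` of
`s_ν(1^p) s_ν(1^q)` times the quotient `(p (n - p) + k)! / (p^(p (n - p) + k) ∏ᵢ (n - p + aᵢ)!)`,
where the sum of the shifts `aᵢ` depends on `k` and `p` only. By Stirling's formula all these
quotients have the same asymptotics, of order `n^(-(p² - 1) / 2)`. By the Cauchy identity, the
remaining sum of the `s_ν(1^p) s_ν(1^q)` counts the monomials of degree `k` in `p q` variables.
That number times `k!` is the rising factorial `(p q) (p q + 1) ⋯ (p q + k - 1)`, the `k`-th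
moment of a Gamma variable of shape `p q`, that is, of half a chi-square variable with `2 p q`
degrees of freedom.
-/

namespace StripHook

open Finset
open scoped ENNReal Nat

/-! ### Interlacing sequences and Gelfand–Tsetlin patterns -/

/-- The sequence `(κ₁, κ₂, …)` left after dropping the first entry of `(κ₀, κ₁, …)`. A sequence
`ν` interlaces `κ`, that is `κ₀ ≥ ν₀ ≥ κ₁ ≥ ν₁ ≥ ⋯`, iff `ν ∈ Finset.Icc (tail κ) κ`. -/
def tail (κ : ℕ →₀ ℕ) : ℕ →₀ ℕ := κ.comapDomain (· + 1) (add_left_injective 1).injOn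

@[simp] lemma tail_apply (κ : ℕ →₀ ℕ) (i : ℕ) : tail κ i = κ (i + 1) := rfl

@[simp] lemma tail_zero : tail 0 = 0 := by
  ext
  simp

lemma tail_sup (κ ν : ℕ →₀ ℕ) : tail (κ ⊔ ν) = tail κ ⊔ tail ν := by
  ext
  simp

/-- The sequence `(a, τ₀, τ₁, …)`. -/
def cons (a : ℕ) (τ : ℕ →₀ ℕ) : ℕ →₀ ℕ :=
  Finsupp.single 0 a + τ.embDomain ⟨(· + 1), add_left_injective 1⟩

@[simp] lemma cons_zero (a : ℕ) (τ : ℕ →₀ ℕ) : cons a τ 0 = a := by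
  rw [cons, Finsupp.add_apply, Finsupp.embDomain_of_notMem_range _ _ _ (by simp)]
  simp

@[simp] lemma cons_succ (a : ℕ) (τ : ℕ →₀ ℕ) (i : ℕ) : cons a τ (i + 1) = τ i := by
  simpa [cons] using Finsupp.embDomain_apply_self ⟨(· + 1), add_left_injective 1⟩ τ i

@[simp] lemma tail_cons (a : ℕ) (τ : ℕ →₀ ℕ) : tail (cons a τ) = τ := by
  ext i
  simp

lemma cons_tail (κ : ℕ →₀ ℕ) : cons (κ 0) (tail κ) = κ := by
  ext i
  cases i <;> simp

/-- Splitting a sequence into its first entry and the remaining sequence. -/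
def consEquiv : ℕ × (ℕ →₀ ℕ) ≃ (ℕ →₀ ℕ) where
  toFun x := cons x.1 x.2
  invFun κ := (κ 0, tail κ)
  left_inv x := by simp
  right_inv := cons_tail

lemma degree_cons (a : ℕ) (τ : ℕ →₀ ℕ) : (cons a τ).degree = a + τ.degree := by
  rw [cons, map_add, Finsupp.degree_single]
  simp only [Finsupp.degree_apply, Finsupp.support_embDomain, sum_map,
    Finsupp.embDomain_apply_self]

lemma degree_eq_add_degree_tail (κ : ℕ →₀ ℕ) : κ.degree = κ 0 + (tail κ).degree := by
  rw [← degree_cons, cons_tail]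

lemma le_cons_iff (κ : ℕ →₀ ℕ) (a : ℕ) (τ : ℕ →₀ ℕ) : κ ≤ cons a τ ↔ κ 0 ≤ a ∧ tail κ ≤ τ := by
  refine ⟨fun h => ⟨by simpa using h 0, fun i => by simpa using h (i + 1)⟩, fun h i => ?_⟩
  cases i with
  | zero => simpa using h.1
  | succ i => simpa using h.2 i

/-- The number of Gelfand–Tsetlin patterns with `q` rows and top row `κ`, i.e. of chains
`0 = κ⁰, κ¹, …, κ^q = κ` in which every sequence interlaces the next one. -/
def gtCount : ℕ → (ℕ →₀ ℕ) → ℕ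
  | 0, κ => if κ = 0 then 1 else 0
  | q + 1, κ => ∑ ν ∈ Icc (tail κ) κ, gtCount q ν

lemma gtCount_zero_right (q : ℕ) : gtCount q 0 = 1 := by
  induction q with
  | zero => simp [gtCount]
  | succ q ih => simp [gtCount, ih]

lemma exists_gtCount_ne_zero {q : ℕ} {κ : ℕ →₀ ℕ} (h : gtCount (q + 1) κ ≠ 0) :
    ∃ ν ∈ Icc (tail κ) κ, gtCount q ν ≠ 0 :=
  exists_ne_zero_of_sum_ne_zero h

lemma apply_eq_zero_of_gtCount_ne_zero {q : ℕ} {κ : ℕ →₀ ℕ} (h : gtCount q κ ≠ 0) {i : ℕ}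
    (hi : q ≤ i) : κ i = 0 := by
  induction q generalizing κ i with
  | zero => simp_all [gtCount]
  | succ q ih =>
    obtain ⟨ν, hν, hν0⟩ := exists_gtCount_ne_zero h
    obtain ⟨j, rfl⟩ : ∃ j, i = j + 1 := ⟨i - 1, by omega⟩
    exact Nat.eq_zero_of_le_zero (((mem_Icc.1 hν).1 j).trans_eq (ih hν0 (by omega)))

lemma antitone_of_gtCount_ne_zero {q : ℕ} {κ : ℕ →₀ ℕ} (h : gtCount q κ ≠ 0) : Antitone κ := by
  refine antitone_nat_of_succ_le fun i => ?_
  cases q with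
  | zero => simp_all [gtCount]
  | succ q =>
    obtain ⟨ν, hν, -⟩ := exists_gtCount_ne_zero h
    exact ((mem_Icc.1 hν).1 i).trans ((mem_Icc.1 hν).2 i)

/-! ### The Cauchy identity -/

/-- The weight `1` if `ν` interlaces `κ` and `0` otherwise. It is `ℝ≥0∞`-valued so that infinite
sums over sequences may be interchanged freely. -/
def interlaceWeight (ν κ : ℕ →₀ ℕ) : ℝ≥0∞ := if ν ∈ Icc (tail κ) κ then 1 else 0

lemma tsum_interlaceWeight_mul (κ : ℕ →₀ ℕ) (f : (ℕ →₀ ℕ) → ℝ≥0∞) :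
    ∑' ν, interlaceWeight ν κ * f ν = ∑ ν ∈ Icc (tail κ) κ, f ν := by
  simp only [interlaceWeight, ite_mul, one_mul, zero_mul]
  rw [tsum_eq_sum (s := Icc (tail κ) κ) fun ν hν => if_neg hν]
  exact sum_congr rfl fun ν hν => if_pos hν

lemma gtCount_succ_eq_tsum (q : ℕ) (κ : ℕ →₀ ℕ) :
    (gtCount (q + 1) κ : ℝ≥0∞) = ∑' ν, interlaceWeight ν κ * gtCount q ν := by
  rw [tsum_interlaceWeight_mul, gtCount, Nat.cast_sum]

/-- The operator of summing a function on `ℕ` over upper rays; its effect on generating functions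
is multiplication by a geometric series. -/
def raySum (g : ℕ → ℝ≥0∞) (x : ℕ) : ℝ≥0∞ := ∑' j, g (x + j)

lemma tsum_ite_le (a : ℕ) (g : ℕ → ℝ≥0∞) : (∑' x, if a ≤ x then g x else 0) = raySum g a := by
  rw [raySum, ← (add_right_injective a).tsum_eq]
  · simp
  · intro x hx
    obtain ⟨hax, -⟩ : a ≤ x ∧ g x ≠ 0 := by simpa using hx
    exact ⟨x - a, Nat.add_sub_cancel' hax⟩

lemma raySum_comp_add (c : ℕ) (g : ℕ → ℝ≥0∞) (x : ℕ) :
    raySum (fun y => g (y + c)) x = raySum g (x + c) := by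
  simp only [raySum, add_right_comm x _ c]

lemma raySum_iterate_comp_add (c m : ℕ) (g : ℕ → ℝ≥0∞) (x : ℕ) :
    raySum^[m] (fun y => g (y + c)) x = raySum^[m] g (x + c) := by
  induction m generalizing x with
  | zero => rfl
  | succ m ih =>
    simp only [Function.iterate_succ_apply', funext ih, raySum_comp_add]

lemma sum_Icc_reflect {M : Type*} [AddCommMonoid M] (a b : ℕ →₀ ℕ) (f : (ℕ →₀ ℕ) → M) :
    ∑ τ ∈ Icc a b, f (a + b - τ) = ∑ τ ∈ Icc a b, f τ := by
  have reflect_mem : ∀ τ ∈ Icc a b, a + b - τ ∈ Icc a b := fun τ hτ => by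
    rw [mem_Icc] at hτ ⊢
    exact ⟨le_tsub_of_add_le_left (by rw [add_comm]; gcongr; exact hτ.2),
      tsub_le_iff_left.2 (by gcongr; exact hτ.1)⟩
  have reflect_reflect : ∀ τ ∈ Icc a b, a + b - (a + b - τ) = τ := fun τ hτ =>
    tsub_tsub_cancel_of_le ((mem_Icc.1 hτ).2.trans le_add_self)
  exact sum_nbij' (a + b - ·) (a + b - ·) reflect_mem reflect_mem reflect_reflect reflect_reflect
    fun _ _ => rfl

lemma degree_tsub (κ ν : ℕ →₀ ℕ) (h : ν ≤ κ) : (κ - ν).degree = κ.degree - ν.degree := by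
  rw [← Nat.add_sub_cancel (n := (κ - ν).degree) (m := ν.degree), ← map_add,
    tsub_add_cancel_of_le h]

lemma degree_sup_add_degree_inf (κ ν : ℕ →₀ ℕ) :
    (κ ⊔ ν).degree + (κ ⊓ ν).degree = κ.degree + ν.degree := by
  rw [← map_add, ← map_add]
  congr 1
  ext i
  simp

lemma interlaceWeight_mul_interlaceWeight_cons (ν α : ℕ →₀ ℕ) (a : ℕ) (τ : ℕ →₀ ℕ) :
    interlaceWeight ν (cons a τ) * interlaceWeight α (cons a τ) =
      if τ ∈ Icc (tail (α ⊔ ν)) (α ⊓ ν) then (if (α ⊔ ν) 0 ≤ a then 1 else 0) else 0 := by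
  have h : (ν ∈ Icc (tail (cons a τ)) (cons a τ) ∧ α ∈ Icc (tail (cons a τ)) (cons a τ)) ↔
      τ ∈ Icc (tail (α ⊔ ν)) (α ⊓ ν) ∧ (α ⊔ ν) 0 ≤ a := by
    simp only [mem_Icc, tail_cons, le_cons_iff, tail_sup, sup_le_iff, le_inf_iff,
      Finsupp.sup_apply]
    tauto
  simp only [interlaceWeight, ite_zero_mul_ite_zero, mul_one, h, ite_and]

lemma interlaceWeight_mul_interlaceWeight (ρ ν α : ℕ →₀ ℕ) :
    interlaceWeight ρ ν * interlaceWeight ρ α =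
      if ρ ∈ Icc (tail (α ⊔ ν)) (α ⊓ ν) then 1 else 0 := by
  have h : (ρ ∈ Icc (tail ν) ν ∧ ρ ∈ Icc (tail α) α) ↔ ρ ∈ Icc (tail (α ⊔ ν)) (α ⊓ ν) := by
    simp only [mem_Icc, tail_sup, sup_le_iff, le_inf_iff]
    tauto
  simp only [interlaceWeight, ite_zero_mul_ite_zero, mul_one, h]

lemma tsum_interlaceWeight_up (ν α : ℕ →₀ ℕ) (g : ℕ → ℝ≥0∞) :
    ∑' κ, interlaceWeight ν κ * interlaceWeight α κ * g κ.degree =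
      ∑ τ ∈ Icc (tail (α ⊔ ν)) (α ⊓ ν), raySum g ((α ⊔ ν) 0 + τ.degree) := by
  rw [← consEquiv.tsum_eq, ENNReal.tsum_prod', ENNReal.tsum_comm,
    tsum_eq_sum (s := Icc (tail (α ⊔ ν)) (α ⊓ ν))]
  · refine sum_congr rfl fun τ hτ => ?_
    rw [← raySum_comp_add, ← tsum_ite_le]
    refine tsum_congr fun a => ?_
    simp only [consEquiv, Equiv.coe_fn_mk, interlaceWeight_mul_interlaceWeight_cons, if_pos hτ,
      degree_cons, ite_mul, one_mul, zero_mul]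
  · intro τ hτ
    simp [consEquiv, interlaceWeight_mul_interlaceWeight_cons, hτ]

/- Above `ν` and `α` the first entry is free and the others range over the box
`[tail (α ⊔ ν), α ⊓ ν]`; below them all entries range over that same box. Reflecting the box
through its centre matches the two sums. -/
lemma tsum_interlaceWeight_up_eq_down (ν α : ℕ →₀ ℕ) (g : ℕ → ℝ≥0∞) :
    ∑' κ, interlaceWeight ν κ * interlaceWeight α κ * g κ.degree =
      ∑' ρ, interlaceWeight ρ ν * interlaceWeight ρ α *
        raySum g (α.degree + ν.degree - ρ.degree) := by
  rw [tsum_interlaceWeight_up, ← sum_Icc_reflect, tsum_eq_sum (s := Icc (tail (α ⊔ ν)) (α ⊓ ν))]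
  · refine sum_congr rfl fun τ hτ => ?_
    have hle : τ ≤ tail (α ⊔ ν) + α ⊓ ν := (mem_Icc.1 hτ).2.trans le_add_self
    have hdegree := Finsupp.degree_mono hle
    rw [interlaceWeight_mul_interlaceWeight, if_pos hτ, one_mul, degree_tsub _ _ hle,
      ← degree_sup_add_degree_inf, degree_eq_add_degree_tail (α ⊔ ν)]
    rw [map_add] at hdegree ⊢
    congr 1
    omega
  · intro ρ hρ
    rw [interlaceWeight_mul_interlaceWeight, if_neg hρ, zero_mul]

lemma tsum_interlaceWeight_mul_gtCount (q : ℕ) (ν : ℕ →₀ ℕ) (g : ℕ → ℝ≥0∞) :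
    ∑' κ, interlaceWeight ν κ * gtCount q κ * g κ.degree =
      gtCount q ν * raySum^[q] g ν.degree := by
  induction q generalizing ν g with
  | zero =>
    rw [tsum_eq_single 0 fun κ hκ => by simp [gtCount, hκ]]
    by_cases hν : ν = 0 <;> simp [gtCount, interlaceWeight, hν]
  | succ q ih =>
    calc ∑' κ, interlaceWeight ν κ * gtCount (q + 1) κ * g κ.degree
      _ = ∑' κ, ∑' α, gtCount q α * (interlaceWeight ν κ * interlaceWeight α κ * g κ.degree) := by
        refine tsum_congr fun κ => ?_
        rw [gtCount_succ_eq_tsum, ← ENNReal.tsum_mul_left, ← ENNReal.tsum_mul_right]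
        exact tsum_congr fun α => by ring
      _ = ∑' α, gtCount q α * ∑' ρ, interlaceWeight ρ ν * interlaceWeight ρ α *
            raySum g (α.degree + ν.degree - ρ.degree) := by
        rw [ENNReal.tsum_comm]
        exact tsum_congr fun α => by rw [ENNReal.tsum_mul_left, tsum_interlaceWeight_up_eq_down]
      _ = ∑' ρ, interlaceWeight ρ ν * ∑' α, interlaceWeight ρ α * gtCount q α *
            raySum g (α.degree + ν.degree - ρ.degree) := by
        simp only [← ENNReal.tsum_mul_left]
        rw [ENNReal.tsum_comm]
        exact tsum_congr fun ρ => tsum_congr fun α => by ring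
      _ = ∑ ρ ∈ Icc (tail ν) ν, ∑' α, interlaceWeight ρ α * gtCount q α *
            raySum g (α.degree + (ν.degree - ρ.degree)) := by
        rw [tsum_interlaceWeight_mul]
        refine sum_congr rfl fun ρ hρ => tsum_congr fun α => ?_
        rw [Nat.add_sub_assoc (Finsupp.degree_mono (mem_Icc.1 hρ).2)]
      _ = ∑ ρ ∈ Icc (tail ν) ν, gtCount q ρ * raySum^[q + 1] g ν.degree := by
        refine sum_congr rfl fun ρ hρ => ?_
        rw [ih ρ fun x => raySum g (x + (ν.degree - ρ.degree)), raySum_iterate_comp_add,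
          Nat.add_sub_cancel' (Finsupp.degree_mono (mem_Icc.1 hρ).2), Function.iterate_succ_apply]
      _ = gtCount (q + 1) ν * raySum^[q + 1] g ν.degree := by
        rw [← sum_mul, gtCount, Nat.cast_sum]

lemma tsum_gtCount_mul_gtCount (p q : ℕ) (g : ℕ → ℝ≥0∞) :
    ∑' κ, (gtCount p κ : ℝ≥0∞) * gtCount q κ * g κ.degree = raySum^[p * q] g 0 := by
  induction p generalizing g with
  | zero =>
    rw [tsum_eq_single 0 fun κ hκ => by simp [gtCount, hκ]]
    simp [gtCount_zero_right]
  | succ p ih =>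
    calc ∑' κ, (gtCount (p + 1) κ : ℝ≥0∞) * gtCount q κ * g κ.degree
      _ = ∑' κ, ∑' ν, gtCount p ν * (interlaceWeight ν κ * gtCount q κ * g κ.degree) := by
        refine tsum_congr fun κ => ?_
        rw [gtCount_succ_eq_tsum, ← ENNReal.tsum_mul_right, ← ENNReal.tsum_mul_right]
        exact tsum_congr fun ν => by ring
      _ = ∑' ν, (gtCount p ν : ℝ≥0∞) * gtCount q ν * raySum^[q] g ν.degree := by
        rw [ENNReal.tsum_comm]
        refine tsum_congr fun ν => ?_
        rw [ENNReal.tsum_mul_left, tsum_interlaceWeight_mul_gtCount, mul_assoc]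
      _ = raySum^[(p + 1) * q] g 0 := by
        rw [ih, ← Function.iterate_add_apply, Nat.succ_mul]

lemma sum_range_multichoose_sub (N c : ℕ) :
    ∑ j ∈ range (c + 1), Nat.multichoose N (c - j) = Nat.multichoose (N + 1) c := by
  induction c with
  | zero => simp
  | succ c ih =>
    rw [sum_range_succ', Nat.multichoose_succ_succ, ← ih, add_comm]
    simp

lemma raySum_iterate_single (N k x : ℕ) :
    raySum^[N] (fun y => if y = k then 1 else 0) x =
      if x ≤ k then (Nat.multichoose N (k - x) : ℝ≥0∞) else 0 := by
  induction N generalizing x with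
  | zero =>
    rcases lt_trichotomy x k with h | rfl | h
    · obtain ⟨c, rfl⟩ := Nat.exists_eq_add_of_lt h
      simp [add_assoc]
    · simp
    · simp [h.ne', h.not_ge]
  | succ N ih =>
    simp only [Function.iterate_succ_apply', raySum, ih]
    split_ifs with h
    · obtain ⟨c, rfl⟩ := Nat.exists_eq_add_of_le h
      rw [tsum_eq_sum (s := range (c + 1)) fun j hj => if_neg (by simp at hj; omega),
        Nat.add_sub_cancel_left, ← sum_range_multichoose_sub, Nat.cast_sum]
      refine sum_congr rfl fun j hj => ?_
      rw [if_pos (by simp at hj; omega), Nat.add_sub_add_left]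
    · exact ENNReal.tsum_eq_zero.2 fun j => if_neg (by omega)

lemma tsum_gtCount_mul_gtCount_of_degree_eq (p q k : ℕ) :
    ∑' κ : ℕ →₀ ℕ, (gtCount p κ : ℝ≥0∞) * gtCount q κ * (if κ.degree = k then 1 else 0) =
      Nat.multichoose (p * q) k := by
  rw [tsum_gtCount_mul_gtCount p q fun y => if y = k then 1 else 0, raySum_iterate_single]
  simp

/-! ### Vandermonde formula for Gelfand–Tsetlin patterns -/

/-- The shifted parts `κ_i + q - 1 - i` (with `i` counted from `0`) of a sequence regarded as having
`q` parts. Only indices `i < q` are meaningful. -/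
def beta (q : ℕ) (κ : ℕ → ℕ) (i : ℕ) : ℕ := κ i + (q - 1 - i)

/-- The determinant of the signed binomial coefficients `(-1)^j * choose (l i) j`, a multiple of the
Vandermonde determinant of `l`. The sign makes it nonnegative on antitone `l`. -/
def binomDet (q : ℕ) (l : Fin q → ℕ) : ℤ :=
  (Matrix.of fun i j : Fin q => (-1 : ℤ) ^ (j : ℕ) * ((l i).choose j : ℤ)).det

lemma det_eq_det_sub_of_col_zero_eq_one {R : Type*} [CommRing R] {n : ℕ}
    (A : Matrix (Fin (n + 1)) (Fin (n + 1)) R) (hA : ∀ i, A i 0 = 1) :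
    A.det = (Matrix.of fun i j : Fin n => A i.succ j.succ - A i.castSucc j.succ).det := by
  let B : Matrix (Fin (n + 1)) (Fin (n + 1)) R :=
    Matrix.of (Fin.cons (A 0) fun i j => A i.succ j - A i.castSucc j)
  have hB (i : Fin n) (j) : B i.succ j = A i.succ j - A i.castSucc j := rfl
  have det_eq : A.det = B.det :=
    Matrix.det_eq_of_forall_row_eq_smul_add_pred (fun _ => 1) (fun _ => rfl)
      fun i j => by simp [hB]
  rw [det_eq, Matrix.det_succ_column_zero, Fin.sum_univ_succ,
    sum_eq_zero fun i _ => by simp [hB, hA]]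
  simp only [Fin.val_zero, pow_zero, one_mul, add_zero, show B 0 0 = 1 from hA 0]
  rfl

lemma sum_Ico_choose {a b : ℕ} (h : a ≤ b) (j : ℕ) :
    ∑ m ∈ Ico a b, (m.choose j : ℤ) = (b.choose (j + 1) : ℤ) - (a.choose (j + 1) : ℤ) := by
  rw [← sum_Ico_sub (fun m => (m.choose (j + 1) : ℤ)) h]
  exact sum_congr rfl fun m _ => by rw [Nat.choose_succ_succ]; push_cast; ring

lemma sum_binomDet (q : ℕ) (l : Fin (q + 1) → ℕ) (hl : Antitone l) :
    ∑ m ∈ Fintype.piFinset (fun i : Fin q => Ico (l i.succ) (l i.castSucc)), binomDet q m =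
      binomDet (q + 1) l := by
  rw [binomDet, det_eq_det_sub_of_col_zero_eq_one _ (by simp)]
  have det_sum := (Matrix.detRowAlternating (n := Fin q) (R := ℤ)).toMultilinearMap.map_sum_finset
    (A := fun i : Fin q => Ico (l i.succ) (l i.castSucc))
    (g := fun _ m => fun j : Fin q => (-1 : ℤ) ^ (j : ℕ) * (m.choose j : ℤ))
  refine det_sum.symm.trans (congrArg Matrix.det ?_)
  ext i j
  rw [Finset.sum_apply, ← mul_sum, sum_Ico_choose (hl i.castSucc_le_succ)]
  simp only [Matrix.of_apply, Fin.val_succ, pow_succ]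
  ring

lemma prod_factorial_mul_binomDet (q : ℕ) (l : Fin q → ℕ) :
    (∏ i : Fin q, ((i : ℕ)! : ℤ)) * binomDet q l =
      ∏ i : Fin q, ∏ j ∈ Ioi i, ((l i : ℤ) - l j) := by
  have prod_eq_det : ∏ i : Fin q, ∏ j ∈ Ioi i, ((l i : ℤ) - l j) =
      (Matrix.vandermonde fun i => -(l i : ℤ)).det := by
    rw [Matrix.det_vandermonde]
    exact prod_congr rfl fun i _ => prod_congr rfl fun j _ => by ring
  have det_neg : (Matrix.vandermonde fun i => -(l i : ℤ)).det =
      (∏ j : Fin q, (-1 : ℤ) ^ (j : ℕ)) * (Matrix.vandermonde fun i => (l i : ℤ)).det := by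
    rw [← Matrix.det_mul_row]
    congr 1
    ext i j
    simp [Matrix.vandermonde_apply, neg_pow (l i : ℤ)]
  have det_binom : (Matrix.vandermonde fun i => (l i : ℤ)).det =
      (∏ i : Fin q, ((i : ℕ)! : ℤ)) * (Matrix.of fun i j : Fin q => ((l i).choose j : ℤ)).det := by
    rw [Matrix.det_eval_matrixOfPolynomials_eq_det_vandermonde _ (fun i => descPochhammer ℤ i)
      (fun i => descPochhammer_natDegree ℤ i) (fun i => monic_descPochhammer ℤ i),
      ← Matrix.det_mul_row]
    congr 1
    ext i j
    simp only [Matrix.of_apply]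
    rw [descPochhammer_eval_eq_descFactorial ℤ, Nat.descFactorial_eq_factorial_mul_choose,
      Nat.cast_mul]
  have binomDet_eq : binomDet q l = (∏ j : Fin q, (-1 : ℤ) ^ (j : ℕ)) *
      (Matrix.of fun i j : Fin q => ((l i).choose j : ℤ)).det := by
    rw [binomDet, ← Matrix.det_mul_row]
    rfl
  rw [prod_eq_det, det_neg, det_binom, binomDet_eq]
  ring

lemma antitone_of_mem_Icc_tail {κ ν : ℕ →₀ ℕ} (hν : ν ∈ Icc (tail κ) κ) : Antitone ν :=
  antitone_nat_of_succ_le fun i => ((mem_Icc.1 hν).2 (i + 1)).trans ((mem_Icc.1 hν).1 i)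

lemma antitone_beta {κ : ℕ → ℕ} (hκ : Antitone κ) (q : ℕ) : Antitone (beta q κ) :=
  fun i j hij => add_le_add (hκ hij) (by omega)

lemma exists_finsupp_extending {q : ℕ} (f : Fin q → ℕ) :
    ∃ ν : ℕ →₀ ℕ, (∀ i : Fin q, ν i = f i) ∧ ∀ i, q ≤ i → ν i = 0 := by
  refine ⟨(Finsupp.equivFunOnFinite.symm f).embDomain Fin.valEmbedding,
    fun i => Finsupp.embDomain_apply_self Fin.valEmbedding _ i,
    fun i hi => Finsupp.embDomain_of_notMem_range _ _ _ ?_⟩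
  rintro ⟨j, rfl⟩
  exact hi.not_gt j.2

lemma sum_Icc_tail_eq_sum_piFinset {M : Type*} [AddCommMonoid M] {κ : ℕ →₀ ℕ} {q : ℕ}
    (hκ : Antitone κ) (hκq : κ (q + 1) = 0) (f : (Fin q → ℕ) → M) :
    ∑ ν ∈ Icc (tail κ) κ with ν q = 0, f (fun i => beta q ν i) =
      ∑ m ∈ Fintype.piFinset fun i : Fin q =>
        Ico (beta (q + 1) κ i.succ) (beta (q + 1) κ i.castSucc), f m := by
  have hκ0 {i : ℕ} (hi : q < i) : κ i = 0 := Nat.eq_zero_of_le_zero (hκq ▸ hκ hi)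
  refine sum_nbij (fun ν i => beta q ν i) (fun ν hν => ?_) (fun ν hν ν' hν' h => ?_)
    (fun m hm => ?_) fun _ _ => rfl
  · rw [mem_filter, mem_Icc] at hν
    refine Fintype.mem_piFinset.2 fun i => mem_Ico.2 ?_
    have lower := hν.1.1 i
    have upper := hν.1.2 i
    simp only [tail_apply] at lower
    simp only [beta, Fin.val_succ, Fin.val_castSucc]
    omega
  · rw [mem_coe, mem_filter, mem_Icc] at hν hν'
    ext i
    rcases lt_trichotomy i q with hi | rfl | hi
    · simpa [beta] using congrFun h ⟨i, hi⟩
    · rw [hν.2, hν'.2]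
    · have := hκ0 hi ▸ hν.1.2 i
      have := hκ0 hi ▸ hν'.1.2 i
      omega
  · simp only [mem_coe, Fintype.mem_piFinset, mem_Ico, beta, Fin.val_succ, Fin.val_castSucc] at hm
    obtain ⟨ν, hν_lt, hν_ge⟩ := exists_finsupp_extending fun i : Fin q => m i - (q - 1 - i)
    refine ⟨ν, ?_, funext fun i => ?_⟩
    · rw [mem_coe, mem_filter, mem_Icc]
      refine ⟨⟨fun i => ?_, fun i => ?_⟩, hν_ge q le_rfl⟩ <;> rcases lt_or_ge i q with hi | hi
      · have := hm ⟨i, hi⟩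
        have := hν_lt ⟨i, hi⟩
        simp only [tail_apply] at *
        omega
      · simp [hκ0 (Nat.lt_succ_of_le hi)]
      · have := hm ⟨i, hi⟩
        have := hν_lt ⟨i, hi⟩
        simp only at *
        omega
      · simp [hν_ge i hi]
    · have := hm i
      simp only [beta, hν_lt i]
      omega

lemma gtCount_eq_binomDet {κ : ℕ →₀ ℕ} {q : ℕ} (hκ : Antitone κ) (hκq : κ q = 0) :
    (gtCount q κ : ℤ) = binomDet q fun i => beta q κ i := by
  induction q generalizing κ with
  | zero =>
    have : κ = 0 := Finsupp.ext fun i => Nat.eq_zero_of_le_zero (hκq ▸ hκ (Nat.zero_le i))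
    simp [gtCount, binomDet, this]
  | succ q ih =>
    calc (gtCount (q + 1) κ : ℤ)
      _ = ∑ ν ∈ Icc (tail κ) κ with ν q = 0, (gtCount q ν : ℤ) := by
        rw [gtCount, Nat.cast_sum, sum_filter_of_ne]
        exact fun ν _ hν => apply_eq_zero_of_gtCount_ne_zero (Nat.cast_ne_zero.1 hν) le_rfl
      _ = ∑ ν ∈ Icc (tail κ) κ with ν q = 0, binomDet q fun i => beta q ν i :=
        sum_congr rfl fun ν hν => ih (antitone_of_mem_Icc_tail (mem_filter.1 hν).1)
          (mem_filter.1 hν).2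
      _ = binomDet (q + 1) fun i => beta (q + 1) κ i := by
        rw [sum_Icc_tail_eq_sum_piFinset hκ hκq,
          ← sum_binomDet _ _ fun i j hij => antitone_beta hκ (q + 1) hij]

lemma prod_factorial_mul_gtCount {κ : ℕ →₀ ℕ} {q : ℕ} (hκ : Antitone κ) (hκq : κ q = 0) :
    (∏ i : Fin q, ((i : ℕ)! : ℤ)) * gtCount q κ =
      ∏ i : Fin q, ∏ j ∈ Ioi i, ((beta q κ i : ℤ) - beta q κ j) := by
  rw [gtCount_eq_binomDet hκ hκq, prod_factorial_mul_binomDet]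

/-! ### Semistandard tableaux and Gelfand–Tsetlin patterns -/

/-- `T` is a semistandard tableau with row lengths `κ` and entries in `{0, …, q - 1}`. As for
`SemistandardYoungTableau`, rows and columns are counted from `0` and `T` vanishes off the shape. -/
structure IsTableau (q : ℕ) (κ : ℕ →₀ ℕ) (T : ℕ → ℕ → ℕ) : Prop where
  row_weak : ∀ {i j₁ j₂ : ℕ}, j₁ < j₂ → j₂ < κ i → T i j₁ ≤ T i j₂
  col_strict : ∀ {i₁ i₂ j : ℕ}, i₁ < i₂ → j < κ i₂ → T i₁ j < T i₂ j
  eq_zero : ∀ {i j : ℕ}, κ i ≤ j → T i j = 0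
  lt : ∀ {i j : ℕ}, j < κ i → T i j < q

/-- The filling of shape `κ` that agrees with `T` on the shape `ν` and is `q` on the rest. -/
def extend (q : ℕ) (κ ν : ℕ →₀ ℕ) (T : ℕ → ℕ → ℕ) (i j : ℕ) : ℕ :=
  if j < ν i then T i j else if j < κ i then q else 0

section

variable {q : ℕ} {κ ν : ℕ →₀ ℕ} {T : ℕ → ℕ → ℕ}

lemma IsTableau.extend (hT : IsTableau q ν T) (hκ : Antitone κ) (hν : ν ∈ Icc (tail κ) κ) :
    IsTableau (q + 1) κ (extend q κ ν T) where
  row_weak {i j₁ j₂} h hj := by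
    have := hT.row_weak h (i := i)
    have := hT.lt (i := i) (j := j₁)
    unfold StripHook.extend
    split_ifs <;> omega
  col_strict {i₁ i₂ j} h hj := by
    have hκ_le : κ i₂ ≤ κ (i₁ + 1) := hκ h
    have hκ_le_ν : κ (i₁ + 1) ≤ ν i₁ := (mem_Icc.1 hν).1 i₁
    have hj₁ : j < ν i₁ := by omega
    have := hT.lt hj₁
    have := hT.col_strict h (j := j)
    unfold StripHook.extend
    split_ifs <;> grind
  eq_zero {i j} hj := by
    have : ν i ≤ κ i := (mem_Icc.1 hν).2 i
    rw [StripHook.extend, if_neg (by omega), if_neg (by omega)]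
  lt {i j} hj := by
    have := hT.lt (i := i) (j := j)
    unfold StripHook.extend
    split_ifs <;> grind

lemma IsTableau.lt_and_extend_lt_iff (hT : IsTableau q ν T) (hν : ν ≤ κ) (i j : ℕ) :
    j < κ i ∧ StripHook.extend q κ ν T i j < q ↔ j < ν i := by
  have := hT.lt (i := i) (j := j)
  have : ν i ≤ κ i := hν i
  unfold StripHook.extend
  split_ifs <;> grind

lemma IsTableau.extend_injective {ν' : ℕ →₀ ℕ} {T' : ℕ → ℕ → ℕ} (hT : IsTableau q ν T)
    (hT' : IsTableau q ν' T') (hν : ν ≤ κ) (hν' : ν' ≤ κ)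
    (h : StripHook.extend q κ ν T = StripHook.extend q κ ν' T') : ν = ν' ∧ T = T' := by
  obtain rfl : ν = ν' := by
    ext i
    exact eq_of_forall_lt_iff fun j => by
      rw [← hT.lt_and_extend_lt_iff hν, ← hT'.lt_and_extend_lt_iff hν', h]
  refine ⟨rfl, funext₂ fun i j => ?_⟩
  rcases lt_or_ge j (ν i) with hj | hj
  · simpa [StripHook.extend, hj] using congrFun₂ h i j
  · rw [hT.eq_zero hj, hT'.eq_zero hj]

lemma IsTableau.exists_forall_lt_iff (hT : IsTableau (q + 1) κ T) (i : ℕ) :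
    ∃ n, ∀ j, j < n ↔ j < κ i ∧ T i j < q := by
  classical
  have hex : ∃ j, ¬(j < κ i ∧ T i j < q) := ⟨κ i, by simp⟩
  refine ⟨Nat.find hex, fun j => ?_⟩
  rw [Nat.lt_find_iff]
  refine ⟨fun h => not_not.1 (h j le_rfl), fun h m hm => not_not.2 ⟨hm.trans_lt h.1, ?_⟩⟩
  rcases hm.eq_or_lt with rfl | hlt
  · exact h.2
  · exact (hT.row_weak hlt h.1).trans_lt h.2

lemma IsTableau.restrict (hT : IsTableau (q + 1) κ T)
    (hν : ∀ i j, j < ν i ↔ j < κ i ∧ T i j < q) :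
    IsTableau q ν fun i j => if j < ν i then T i j else 0 where
  row_weak {i j₁ j₂} h hj := by
    simpa only [if_pos hj, if_pos (h.trans hj)] using hT.row_weak h ((hν i j₂).1 hj).1
  col_strict {i₁ i₂ j} h hj := by
    have := hT.col_strict h ((hν i₂ j).1 hj).1
    simp only [if_pos hj]
    split_ifs <;> omega
  eq_zero hj := if_neg hj.not_gt
  lt {i j} hj := by simpa only [if_pos hj] using ((hν i j).1 hj).2

lemma IsTableau.exists_extend_eq (hT : IsTableau (q + 1) κ T) (hκ : Antitone κ) :
    ∃ ν ∈ Icc (tail κ) κ, ∃ T', IsTableau q ν T' ∧ StripHook.extend q κ ν T' = T := by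
  choose n hn using hT.exists_forall_lt_iff
  have hn_le (i : ℕ) : n i ≤ κ i := by
    by_contra! hlt
    exact lt_irrefl _ ((hn i _).1 hlt).1
  have tail_le (i : ℕ) : κ (i + 1) ≤ n i := by
    by_contra! hlt
    have hcol := hT.col_strict (Nat.lt_add_one i) hlt
    have hlt_q := hT.lt hlt
    have hnot := (hn i (n i)).not.1 (lt_irrefl _)
    have := hκ (Nat.le_add_right i 1)
    omega
  let ν : ℕ →₀ ℕ := Finsupp.onFinset κ.support n fun i hi => by
    have := hn_le i
    rw [Finsupp.mem_support_iff]
    omega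
  refine ⟨ν, mem_Icc.2 ⟨tail_le, hn_le⟩, _, hT.restrict (ν := ν) hn, funext₂ fun i j => ?_⟩
  have hν : j < ν i ↔ j < κ i ∧ T i j < q := hn i j
  have := hT.lt (i := i) (j := j)
  have := hT.eq_zero (i := i) (j := j)
  unfold StripHook.extend
  split_ifs <;> grind

/-- The branching rule: deleting the entries `q` of a tableau with entries in `{0, …, q}` leaves a
tableau whose shape interlaces the original one. -/
def extendEquiv (q : ℕ) (hκ : Antitone κ) :
    (Σ ν : Icc (tail κ) κ, {T // IsTableau q ν T}) ≃ {T // IsTableau (q + 1) κ T} :=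
  Equiv.ofBijective (fun x => ⟨StripHook.extend q κ x.1 x.2, x.2.2.extend hκ x.1.2⟩) <| by
    constructor
    · rintro ⟨⟨ν, hν⟩, T, hT⟩ ⟨⟨ν', hν'⟩, T', hT'⟩ h
      obtain ⟨rfl, rfl⟩ := hT.extend_injective hT' (mem_Icc.1 hν).2 (mem_Icc.1 hν').2
        (Subtype.ext_iff.1 h)
      rfl
    · rintro ⟨T, hT⟩
      obtain ⟨ν, hν, T', hT', h⟩ := hT.exists_extend_eq hκ
      exact ⟨⟨⟨ν, hν⟩, T', hT'⟩, Subtype.ext h⟩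

lemma isTableau_zero_iff : IsTableau 0 κ T ↔ κ = 0 ∧ T = 0 := by
  refine ⟨fun hT => ?_, ?_⟩
  · have hκ : κ = 0 := by
      ext i
      by_contra hi
      exact Nat.not_lt_zero _ (hT.lt (Nat.pos_of_ne_zero hi))
    exact ⟨hκ, funext₂ fun i j => hT.eq_zero (by simp [hκ])⟩
  · rintro ⟨rfl, rfl⟩
    constructor <;> simp

end

lemma finite_isTableau_and_card_eq (q : ℕ) {κ : ℕ →₀ ℕ} (hκ : Antitone κ) :
    Finite {T // IsTableau q κ T} ∧ Nat.card {T // IsTableau q κ T} = gtCount q κ := by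
  induction q generalizing κ with
  | zero =>
    by_cases h : κ = 0 <;> simpa [isTableau_zero_iff, gtCount, h] using Finite.of_subsingleton
  | succ q ih =>
    have ih' (ν : Icc (tail κ) κ) := ih (antitone_of_mem_Icc_tail ν.2)
    have _ (ν : Icc (tail κ) κ) : Finite {T // IsTableau q ν T} := (ih' ν).1
    refine ⟨Finite.of_equiv _ (extendEquiv q hκ), ?_⟩
    rw [← Nat.card_congr (extendEquiv q hκ), Nat.card_sigma, gtCount,
      ← sum_coe_sort (Icc (tail κ) κ)]
    exact sum_congr rfl fun ν _ => (ih' ν).2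

/-- The row lengths of a Young diagram as a finitely supported sequence. -/
def rowLens (μ : YoungDiagram) : ℕ →₀ ℕ :=
  Finsupp.onFinset (range (μ.colLen 0)) μ.rowLen fun i hi => by
    rw [mem_range, ← YoungDiagram.mem_iff_lt_colLen, YoungDiagram.mem_iff_lt_rowLen]
    exact Nat.pos_of_ne_zero hi

@[simp] lemma rowLens_apply (μ : YoungDiagram) (i : ℕ) : rowLens μ i = μ.rowLen i := rfl

lemma antitone_rowLen (μ : YoungDiagram) : Antitone μ.rowLen := fun _ _ => μ.rowLen_anti _ _

lemma antitone_rowLens (μ : YoungDiagram) : Antitone (rowLens μ) := antitone_rowLen μ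

/-- Mathlib's semistandard tableaux with entries below `q` are the tableaux of `IsTableau`. -/
def semistandardEquiv (μ : YoungDiagram) (q : ℕ) :
    {T : SemistandardYoungTableau μ // ∀ c ∈ μ.cells, T c.1 c.2 < q} ≃
      {T // IsTableau q (rowLens μ) T} where
  toFun T := ⟨T.1.entry,
    { row_weak := fun h hj => T.1.row_weak' h (YoungDiagram.mem_iff_lt_rowLen.2 hj)
      col_strict := fun h hj => T.1.col_strict' h (YoungDiagram.mem_iff_lt_rowLen.2 hj)
      eq_zero := fun hj => T.1.zeros' fun h => hj.not_gt (YoungDiagram.mem_iff_lt_rowLen.1 h)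
      lt := fun hj => T.2 (_, _) (YoungDiagram.mem_iff_lt_rowLen.2 hj) }⟩
  invFun T := ⟨
    { entry := T.1
      row_weak' := fun h hj => T.2.row_weak h (YoungDiagram.mem_iff_lt_rowLen.1 hj)
      col_strict' := fun h hj => T.2.col_strict h (YoungDiagram.mem_iff_lt_rowLen.1 hj)
      zeros' := fun h => T.2.eq_zero (not_lt.1 fun hj => h (YoungDiagram.mem_iff_lt_rowLen.2 hj)) },
    fun c hc => T.2.lt (YoungDiagram.mem_iff_lt_rowLen.1 ((YoungDiagram.mem_cells c).1 hc))⟩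
  left_inv _ := rfl
  right_inv _ := rfl

lemma numSSYT_eq_gtCount (μ : YoungDiagram) (q : ℕ) : numSSYT μ q = gtCount q (rowLens μ) := by
  rw [← (finite_isTableau_and_card_eq q (antitone_rowLens μ)).2, numSSYT,
    ← Nat.card_congr (semistandardEquiv μ q)]
  rfl

lemma rowLen_eq_zero_of_numSSYT_ne_zero {μ : YoungDiagram} {q : ℕ} (h : numSSYT μ q ≠ 0) :
    μ.rowLen q = 0 := by
  rw [numSSYT_eq_gtCount] at h
  exact apply_eq_zero_of_gtCount_ne_zero h le_rfl

lemma prod_factorial_mul_numSSYT {μ : YoungDiagram} {q : ℕ} (h : μ.rowLen q = 0) :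
    (∏ i : Fin q, ((i : ℕ)! : ℤ)) * numSSYT μ q =
      ∏ i : Fin q, ∏ j ∈ Ioi i, ((beta q μ.rowLen i : ℤ) - beta q μ.rowLen j) := by
  rw [numSSYT_eq_gtCount]
  exact prod_factorial_mul_gtCount (antitone_rowLens μ) h

/-! ### The hook content formula -/

lemma lt_colLen_iff_lt_rowLen (μ : YoungDiagram) (i j : ℕ) : i < μ.colLen j ↔ j < μ.rowLen i := by
  rw [← YoungDiagram.mem_iff_lt_colLen, YoungDiagram.mem_iff_lt_rowLen]

lemma rowLen_eq_zero_of_le {μ : YoungDiagram} {p i : ℕ} (h : μ.rowLen p = 0) (hi : p ≤ i) :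
    μ.rowLen i = 0 :=
  Nat.eq_zero_of_le_zero (h ▸ μ.rowLen_anti p i hi)

lemma colLen_le {μ : YoungDiagram} {p : ℕ} (h : μ.rowLen p = 0) (j : ℕ) : μ.colLen j ≤ p := by
  by_contra! hlt
  exact Nat.not_lt_zero j (h ▸ (lt_colLen_iff_lt_rowLen μ p j).1 hlt)

lemma hookProd_pos (μ : YoungDiagram) : 0 < hookProd μ := by
  refine prod_pos fun c hc => ?_
  have := YoungDiagram.mem_iff_lt_rowLen.1 ((μ.mem_cells c).1 hc)
  have := YoungDiagram.mem_iff_lt_colLen.1 ((μ.mem_cells c).1 hc)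
  rw [hookLen]
  omega

lemma prod_mul_prod_eq_factorial {ι ι' : Type*} {s : Finset ι} {t : Finset ι'} {f : ι → ℕ}
    {g : ι' → ℕ} {n : ℕ} (hf : Set.InjOn f s) (hg : Set.InjOn g t)
    (hf_mem : ∀ x ∈ s, f x ∈ Icc 1 n) (hg_mem : ∀ y ∈ t, g y ∈ Icc 1 n)
    (hne : ∀ x ∈ s, ∀ y ∈ t, f x ≠ g y) (hcard : #s + #t = n) :
    (∏ x ∈ s, f x) * ∏ y ∈ t, g y = n ! := by
  classical
  have hdisj : Disjoint (s.image f) (t.image g) := by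
    simpa [disjoint_left] using fun x hx y hy => (hne x hx y hy).symm
  have hunion : s.image f ∪ t.image g = Icc 1 n := by
    refine eq_of_subset_of_card_le
      (union_subset (image_subset_iff.2 hf_mem) (image_subset_iff.2 hg_mem)) ?_
    rw [card_union_of_disjoint hdisj, card_image_of_injOn hf, card_image_of_injOn hg, hcard]
    simp
  have hprod : ∏ i ∈ Icc 1 n, i = n ! := prod_Ico_id_eq_factorial n
  rw [← hprod, ← hunion, prod_union hdisj, prod_image hf, prod_image hg]

/- The hook lengths in row `i` and the differences `beta i - beta i'` for `i' > i` are together the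
numbers `1, …, beta i`. -/
lemma prod_hookLen_row_mul_prod_beta_sub {μ : YoungDiagram} {q i : ℕ} (h : μ.rowLen q = 0)
    (hi : i < q) :
    (∏ j ∈ range (μ.rowLen i), hookLen μ (i, j)) *
      ∏ i' ∈ Ioo i q, (beta q μ.rowLen i - beta q μ.rowLen i') = (beta q μ.rowLen i)! := by
  have hcol := lt_colLen_iff_lt_rowLen μ
  have hook_strictAnti : StrictAntiOn (fun j => hookLen μ (i, j)) (range (μ.rowLen i)) := by
    intro a _ b hb hab
    have := (hcol i b).2 (mem_range.1 hb)
    have := μ.colLen_anti a b hab.le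
    simp only [hookLen]
    have := mem_range.1 hb
    omega
  have sub_strictMono :
      StrictMonoOn (fun i' => beta q μ.rowLen i - beta q μ.rowLen i') (Ioo i q) := by
    intro a ha b hb hab
    simp only [coe_Ioo, Set.mem_Ioo] at ha hb
    have := μ.rowLen_anti i a ha.1.le
    have := μ.rowLen_anti a b hab.le
    simp only [beta]
    omega
  refine prod_mul_prod_eq_factorial hook_strictAnti.injOn sub_strictMono.injOn
    (fun j hj => ?_) (fun i' hi' => ?_) (fun j hj i' hi' => ?_) ?_
  · have := (hcol i j).2 (mem_range.1 hj)
    have := colLen_le h j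
    have := mem_range.1 hj
    simp only [hookLen, beta, mem_Icc]
    omega
  · have := mem_Ioo.1 hi'
    have := μ.rowLen_anti i i' (by omega)
    simp only [beta, mem_Icc]
    omega
  · have := (hcol i j).2 (mem_range.1 hj)
    have := hcol i' j
    have := mem_range.1 hj
    have := mem_Ioo.1 hi'
    have := μ.rowLen_anti i i' (by omega)
    simp only [hookLen, beta]
    omega
  · simp only [card_range, Nat.card_Ioo, beta]
    omega

lemma hookProd_eq_prod_range {μ : YoungDiagram} {q : ℕ} (h : μ.rowLen q = 0) :
    hookProd μ = ∏ i ∈ range q, ∏ j ∈ range (μ.rowLen i), hookLen μ (i, j) := by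
  refine prod_finset_product _ _ _ fun ⟨i, j⟩ => ?_
  rw [YoungDiagram.mem_cells, YoungDiagram.mem_iff_lt_rowLen, mem_range, mem_range]
  refine ⟨fun hj => ⟨?_, hj⟩, And.right⟩
  by_contra! hi
  exact Nat.not_lt_zero j (rowLen_eq_zero_of_le h hi ▸ hj)

lemma prod_Ioi_fin_eq_prod_Ioo {M : Type*} [CommMonoid M] {q : ℕ} (i : Fin q) (f : ℕ → M) :
    ∏ j ∈ Ioi i, f j = ∏ j ∈ Ioo (i : ℕ) q, f j := by
  rw [← Fin.map_valEmbedding_Ioi, prod_map]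
  rfl

lemma prod_factorial_mul_numSSYT_eq_prod_Ioo {μ : YoungDiagram} {q : ℕ} (h : μ.rowLen q = 0) :
    (∏ i ∈ range q, i !) * numSSYT μ q =
      ∏ i ∈ range q, ∏ i' ∈ Ioo i q, (beta q μ.rowLen i - beta q μ.rowLen i') := by
  rw [← Fin.prod_univ_eq_prod_range, ← Fin.prod_univ_eq_prod_range]
  zify
  rw [prod_factorial_mul_numSSYT h]
  refine prod_congr rfl fun i _ => ?_
  rw [prod_Ioi_fin_eq_prod_Ioo i fun j => (beta q μ.rowLen i - beta q μ.rowLen j : ℤ)]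
  exact prod_congr rfl fun j hj =>
    (Nat.cast_sub (antitone_beta (antitone_rowLen μ) q (mem_Ioo.1 hj).1.le)).symm

lemma numSSYT_mul_hookProd {μ : YoungDiagram} {q : ℕ} (h : μ.rowLen q = 0) :
    numSSYT μ q * hookProd μ * ∏ i ∈ range q, i ! = ∏ i ∈ range q, (beta q μ.rowLen i)! := by
  calc numSSYT μ q * hookProd μ * (∏ i ∈ range q, i !)
    _ = hookProd μ * ((∏ i ∈ range q, i !) * numSSYT μ q) := by ring
    _ = ∏ i ∈ range q, (beta q μ.rowLen i)! := by
      rw [prod_factorial_mul_numSSYT_eq_prod_Ioo h, hookProd_eq_prod_range h, ← prod_mul_distrib]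
      exact prod_congr rfl fun i hi => prod_hookLen_row_mul_prod_beta_sub h (mem_range.1 hi)

lemma numSSYT_mul_hookProd_of_le {μ : YoungDiagram} {p q : ℕ} (hpq : p ≤ q) (h : μ.rowLen p = 0) :
    numSSYT μ q * hookProd μ * ∏ i ∈ range p, (q - 1 - i)! =
      ∏ i ∈ range p, (beta q μ.rowLen i)! := by
  have beta_eq : ∏ i ∈ Ico p q, (beta q μ.rowLen i)! = ∏ i ∈ Ico p q, (q - 1 - i)! :=
    prod_congr rfl fun i hi => by
      rw [beta, rowLen_eq_zero_of_le h (mem_Ico.1 hi).1, zero_add]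
  have hook := numSSYT_mul_hookProd (rowLen_eq_zero_of_le h hpq)
  rw [← prod_range_reflect, ← prod_range_mul_prod_Ico _ hpq, ← prod_range_mul_prod_Ico _ hpq,
    beta_eq, ← mul_assoc] at hook
  exact Nat.eq_of_mul_eq_mul_right (prod_pos fun i _ => Nat.factorial_pos _) hook

/-! ### Shapes containing a rectangle -/

lemma rowLens_injective : Function.Injective rowLens := by
  intro μ μ' h
  refine YoungDiagram.ext (Finset.ext fun c => ?_)
  rw [YoungDiagram.mem_cells, YoungDiagram.mem_cells, YoungDiagram.mem_iff_lt_rowLen,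
    YoungDiagram.mem_iff_lt_rowLen, ← rowLens_apply, ← rowLens_apply, h]

lemma degree_rowLens (μ : YoungDiagram) : (rowLens μ).degree = μ.card := by
  have hmaps : (μ.cells : Set (ℕ × ℕ)).MapsTo Prod.fst (rowLens μ).support := fun c hc =>
    Finsupp.mem_support_iff.2 (Nat.ne_zero_of_lt (YoungDiagram.mem_iff_lt_rowLen.1 hc))
  rw [YoungDiagram.card, Finsupp.degree_apply, card_eq_sum_card_fiberwise hmaps]
  exact sum_congr rfl fun i _ => μ.rowLen_eq_card

/-- The Young diagram with row lengths `κ`. -/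
def diagramOf (κ : ℕ →₀ ℕ) (hκ : Antitone κ) : YoungDiagram where
  cells := {c ∈ κ.support ×ˢ range (κ 0) | c.2 < κ c.1}
  isLowerSet := by
    rintro ⟨i, j⟩ ⟨i', j'⟩ ⟨hi, hj⟩ hmem
    have := hκ hi
    have := hκ (Nat.zero_le i')
    simp only [coe_filter, mem_product, Finsupp.mem_support_iff, mem_range,
      Set.mem_ofPred_eq] at *
    omega

lemma rowLens_diagramOf (κ : ℕ →₀ ℕ) (hκ : Antitone κ) : rowLens (diagramOf κ hκ) = κ := by
  ext i
  refine eq_of_forall_lt_iff fun j => ?_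
  have := hκ (Nat.zero_le i)
  rw [rowLens_apply, ← YoungDiagram.mem_iff_lt_rowLen, ← YoungDiagram.mem_cells]
  simp only [diagramOf, mem_filter, mem_product, Finsupp.mem_support_iff, mem_range]
  omega

/-- The row lengths `(N, …, N, 0, …)` of the rectangle with `p` rows and `N` columns. -/
def rectangle (p N : ℕ) : ℕ →₀ ℕ := Finsupp.indicator (range p) fun _ _ => N

lemma rectangle_apply (p N i : ℕ) : rectangle p N i = if i < p then N else 0 := by
  simp [rectangle, Finsupp.indicator_apply]

lemma antitone_rectangle (p N : ℕ) : Antitone (rectangle p N) := by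
  intro i j hij
  simp only [rectangle_apply]
  split_ifs <;> omega

lemma degree_rectangle (p N : ℕ) : (rectangle p N).degree = p * N := by
  rw [rectangle, Finsupp.indicator_eq_sum_single, map_sum]
  simp

/-- The Young diagram whose first `p` rows are those of `ν` lengthened by `N` cells. -/
def addRectangle (p N : ℕ) (ν : YoungDiagram) : YoungDiagram :=
  diagramOf (rectangle p N + rowLens ν) ((antitone_rectangle p N).add (antitone_rowLens ν))

section addRectangle

variable {p N : ℕ} {ν : YoungDiagram}

lemma rowLens_addRectangle (p N : ℕ) (ν : YoungDiagram) :
    rowLens (addRectangle p N ν) = rectangle p N + rowLens ν :=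
  rowLens_diagramOf _ _

lemma addRectangle_injective (p N : ℕ) : Function.Injective (addRectangle p N) := by
  intro ν ν' h
  apply rowLens_injective
  simpa [rowLens_addRectangle] using congrArg rowLens h

lemma card_addRectangle (p N : ℕ) (ν : YoungDiagram) :
    (addRectangle p N ν).card = p * N + ν.card := by
  rw [← degree_rowLens, rowLens_addRectangle, map_add, degree_rectangle, degree_rowLens]

lemma rowLen_addRectangle (p N : ℕ) (ν : YoungDiagram) (i : ℕ) :
    (addRectangle p N ν).rowLen i = (if i < p then N else 0) + ν.rowLen i := by
  rw [← rowLens_apply, rowLens_addRectangle, Finsupp.add_apply, rectangle_apply, rowLens_apply]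

lemma exists_addRectangle_eq {μ : YoungDiagram} (h : μ.rowLen p = 0)
    (hN : ∀ i < p, N ≤ μ.rowLen i) : ∃ ν, ν.rowLen p = 0 ∧ addRectangle p N ν = μ := by
  have hle : rectangle p N ≤ rowLens μ := by
    intro i
    rw [rectangle_apply, rowLens_apply]
    split_ifs with hi
    exacts [hN i hi, Nat.zero_le _]
  have hanti : Antitone (rowLens μ - rectangle p N) := by
    intro i j hij
    have := μ.rowLen_anti i j hij
    have : p ≤ j → μ.rowLen j = 0 := rowLen_eq_zero_of_le h
    simp only [Finsupp.tsub_apply, rowLens_apply, rectangle_apply]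
    split_ifs <;> omega
  refine ⟨diagramOf _ hanti, ?_, rowLens_injective ?_⟩
  · rw [← rowLens_apply, rowLens_diagramOf, Finsupp.tsub_apply, rowLens_apply, h, Nat.zero_sub]
  · rw [rowLens_addRectangle, rowLens_diagramOf, add_tsub_cancel_of_le hle]

lemma rowLen_addRectangle_eq_zero (hν : ν.rowLen p = 0) : (addRectangle p N ν).rowLen p = 0 := by
  rw [rowLen_addRectangle, if_neg (lt_irrefl p), hν]

lemma beta_addRectangle (q : ℕ) {i : ℕ} (hi : i < p) :
    beta q (addRectangle p N ν).rowLen i = N + beta q ν.rowLen i := by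
  rw [beta, beta, rowLen_addRectangle, if_pos hi, add_assoc]

lemma colLen_addRectangle (hν : ν.rowLen p = 0) {j : ℕ} (hj : j < N) :
    (addRectangle p N ν).colLen j = p := by
  refine eq_of_forall_lt_iff fun i => ?_
  have : p ≤ i → ν.rowLen i = 0 := rowLen_eq_zero_of_le hν
  rw [lt_colLen_iff_lt_rowLen, rowLen_addRectangle]
  split_ifs <;> omega

/- The Vandermonde product of the `beta`s is translation invariant. -/
lemma numSSYT_addRectangle (hν : ν.rowLen p = 0) :
    numSSYT (addRectangle p N ν) p = numSSYT ν p := by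
  refine Nat.eq_of_mul_eq_mul_left (prod_pos fun i (_ : i ∈ range p) => i.factorial_pos) ?_
  rw [prod_factorial_mul_numSSYT_eq_prod_Ioo (rowLen_addRectangle_eq_zero hν),
    prod_factorial_mul_numSSYT_eq_prod_Ioo hν]
  refine prod_congr rfl fun i hi => prod_congr rfl fun j hj => ?_
  rw [beta_addRectangle p (mem_range.1 hi), beta_addRectangle p (mem_Ioo.1 hj).2,
    Nat.add_sub_add_left]

lemma numSSYT_mul_hookProd_addRectangle (hν : ν.rowLen p = 0) :
    numSSYT ν p * hookProd (addRectangle p N ν) * ∏ i ∈ range p, (p - 1 - i)! =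
      ∏ i ∈ range p, (N + beta p ν.rowLen i)! := by
  rw [← numSSYT_addRectangle hν,
    numSSYT_mul_hookProd_of_le le_rfl (rowLen_addRectangle_eq_zero hν)]
  exact prod_congr rfl fun i hi => by rw [beta_addRectangle p (mem_range.1 hi)]

lemma prod_Ico_add_sub_mul_factorial (c : ℕ) {r N : ℕ} (h : r ≤ N) :
    (∏ j ∈ Ico (N - r) N, (c + (N - j))) * c ! = (c + r)! := by
  have reflect : ∏ j ∈ Ico (N - r) N, (c + (N - j)) = ∏ t ∈ range r, (c + 1 + t) := by
    refine prod_nbij' (N - 1 - ·) (N - 1 - ·) ?_ ?_ ?_ ?_ ?_ <;>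
      simp only [mem_Ico, mem_range] <;> omega
  rw [reflect, ← Nat.ascFactorial_eq_prod_range, mul_comm, Nat.factorial_mul_ascFactorial]

lemma Hstrip_addRectangle {n q : ℕ} (hν : ν.rowLen p = 0) :
    Hstrip n p q (addRectangle p (n - p) ν) =
      ∏ i ∈ range p, ∏ j ∈ Ico (n - q) (n - p), (beta p ν.rowLen i + (n - p - j)) := by
  rw [Hstrip, prod_finset_product _ (range p) fun _ => Ico (n - q) (n - p)]
  · refine prod_congr rfl fun i hi => prod_congr rfl fun j hj => ?_
    have := mem_range.1 hi
    have := mem_Ico.1 hj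
    rw [hookLen, colLen_addRectangle hν (by omega), rowLen_addRectangle, if_pos (by omega), beta]
    dsimp only
    omega
  · rintro ⟨i, j⟩
    have : p ≤ i → ν.rowLen i = 0 := rowLen_eq_zero_of_le hν
    rw [mem_filter, YoungDiagram.mem_cells, YoungDiagram.mem_iff_lt_rowLen, rowLen_addRectangle,
      mem_range, mem_Ico]
    split_ifs <;> omega

lemma Hstrip_addRectangle_mul_prod_factorial {n q : ℕ} (hpq : p ≤ q) (hqn : q ≤ n)
    (hν : ν.rowLen p = 0) :
    Hstrip n p q (addRectangle p (n - p) ν) * ∏ i ∈ range p, (beta p ν.rowLen i)! =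
      ∏ i ∈ range p, (beta q ν.rowLen i)! := by
  rw [Hstrip_addRectangle hν, ← prod_mul_distrib]
  refine prod_congr rfl fun i hi => ?_
  have hi := mem_range.1 hi
  have strip := prod_Ico_add_sub_mul_factorial (beta p ν.rowLen i)
    (Nat.sub_le_sub_right hqn p : q - p ≤ n - p)
  rw [Nat.sub_sub_sub_cancel_right hpq] at strip
  rw [strip, beta, beta, add_assoc]
  congr 2
  omega

/- Compare the hook content formulas for `numSSYT ν p` and `numSSYT ν q`. -/
lemma numSSYT_mul_Hstrip_addRectangle {n q : ℕ} (hpq : p ≤ q) (hqn : q ≤ n)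
    (hν : ν.rowLen p = 0) :
    numSSYT ν p * (∏ i ∈ range p, (p - 1 - i)!) * Hstrip n p q (addRectangle p (n - p) ν) =
      numSSYT ν q * ∏ i ∈ range p, (q - 1 - i)! := by
  refine Nat.eq_of_mul_eq_mul_right (hookProd_pos ν) ?_
  calc numSSYT ν p * (∏ i ∈ range p, (p - 1 - i)!) *
        Hstrip n p q (addRectangle p (n - p) ν) * hookProd ν
    _ = Hstrip n p q (addRectangle p (n - p) ν) *
        (numSSYT ν p * hookProd ν * ∏ i ∈ range p, (p - 1 - i)!) := by ring
    _ = numSSYT ν q * hookProd ν * ∏ i ∈ range p, (q - 1 - i)! := by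
      rw [numSSYT_mul_hookProd_of_le le_rfl hν, numSSYT_mul_hookProd_of_le hpq hν,
        Hstrip_addRectangle_mul_prod_factorial hpq hqn hν]
    _ = numSSYT ν q * (∏ i ∈ range p, (q - 1 - i)!) * hookProd ν := by ring

lemma Pword_mul_Hstrip_addRectangle {n q : ℕ} (ℓ : ℕ) (hpq : p ≤ q) (hqn : q ≤ n)
    (hν : ν.rowLen p = 0) :
    Pword ℓ p (addRectangle p (n - p) ν) * Hstrip n p q (addRectangle p (n - p) ν) =
      (p * (n - p) + ν.card)! / (p ^ ℓ * ∏ i ∈ range p, (n - p + beta p ν.rowLen i)! : ℝ) *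
        (numSSYT ν p * numSSYT ν q * ∏ i ∈ range p, (q - 1 - i)!) := by
  have hook : (numSSYT ν p * hookProd (addRectangle p (n - p) ν) * ∏ i ∈ range p, (p - 1 - i)! : ℝ)
      = ∏ i ∈ range p, (n - p + beta p ν.rowLen i)! := by
    exact_mod_cast numSSYT_mul_hookProd_addRectangle hν
  have strip : (numSSYT ν p * (∏ i ∈ range p, (p - 1 - i)!) *
      Hstrip n p q (addRectangle p (n - p) ν) : ℝ) = numSSYT ν q * ∏ i ∈ range p, (q - 1 - i)! := by
    exact_mod_cast numSSYT_mul_Hstrip_addRectangle hpq hqn hν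
  have hook_ne : (hookProd (addRectangle p (n - p) ν) : ℝ) ≠ 0 := mod_cast (hookProd_pos _).ne'
  rw [Pword, fSYT, card_addRectangle, numSSYT_addRectangle hν, mul_assoc (numSSYT ν p : ℝ), ← strip]
  field_simp
  rw [← hook]
  ring

end addRectangle

/-! ### The expectation as a finite sum -/

lemma finite_card_eq_and_rowLen_eq_zero (p k : ℕ) :
    {ν : YoungDiagram | ν.card = k ∧ ν.rowLen p = 0}.Finite := by
  refine ((Set.finite_Icc 0 (rectangle p k)).preimage rowLens_injective.injOn).subset ?_
  rintro ν ⟨rfl, hν⟩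
  refine ⟨zero_le, fun i => ?_⟩
  rw [rectangle_apply]
  split_ifs with hi
  · exact (Finsupp.le_degree i _).trans_eq (degree_rowLens ν)
  · exact (rowLen_eq_zero_of_le hν (not_lt.1 hi)).le

/-- The partitions of `k` into at most `p` parts. -/
def boundedShapes (p k : ℕ) : Finset YoungDiagram :=
  (finite_card_eq_and_rowLen_eq_zero p k).toFinset

lemma mem_boundedShapes {p k : ℕ} {ν : YoungDiagram} :
    ν ∈ boundedShapes p k ↔ ν.card = k ∧ ν.rowLen p = 0 :=
  Set.Finite.mem_toFinset _

lemma sum_numSSYT_mul_numSSYT (p q k : ℕ) :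
    ∑ ν ∈ boundedShapes p k, numSSYT ν p * numSSYT ν q = Nat.multichoose (p * q) k := by
  have cauchy := tsum_gtCount_mul_gtCount_of_degree_eq p q k
  rw [tsum_eq_sum (s := (boundedShapes p k).map ⟨rowLens, rowLens_injective⟩), sum_map] at cauchy
  · rw [← Nat.cast_inj (R := ℝ≥0∞), ← cauchy]
    push_cast
    refine sum_congr rfl fun ν hν => ?_
    simp [numSSYT_eq_gtCount, degree_rowLens, (mem_boundedShapes.1 hν).1]
  · intro κ hκ
    by_contra! hne
    simp only [ne_eq, mul_eq_zero, Nat.cast_eq_zero, ite_eq_right_iff, one_ne_zero, imp_false,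
      not_or, not_not] at hne
    obtain ⟨⟨hp, -⟩, rfl⟩ := hne
    have hκ_anti := antitone_of_gtCount_ne_zero hp
    refine hκ (mem_map.2 ⟨diagramOf κ hκ_anti, mem_boundedShapes.2 ⟨?_, ?_⟩,
      rowLens_diagramOf κ hκ_anti⟩)
    · rw [← degree_rowLens, rowLens_diagramOf]
    · rw [← rowLens_apply, rowLens_diagramOf, apply_eq_zero_of_gtCount_ne_zero hp le_rfl]

lemma indSup_addRectangle (n p : ℕ) (ν : YoungDiagram) :
    indSup n p (addRectangle p (n - p) ν) = 1 :=
  if_pos fun i hi => by rw [rowLen_addRectangle, if_pos hi]; exact Nat.le_add_right _ _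

lemma exists_addRectangle_eq_of_ne_zero {n p k : ℕ} {μ : YoungDiagram} {x : ℝ}
    (hcard : μ.card = p * (n - p) + k) (hμ : Pword μ.card p μ * (indSup n p μ * x) ≠ 0) :
    ∃ ν ∈ boundedShapes p k, addRectangle p (n - p) ν = μ := by
  have hssyt : numSSYT μ p ≠ 0 := fun h => left_ne_zero_of_mul hμ (by simp [Pword, h])
  have hsup : ∀ i < p, n - p ≤ μ.rowLen i := by
    by_contra h
    exact left_ne_zero_of_mul (right_ne_zero_of_mul hμ) (if_neg h)
  obtain ⟨ν, hν, rfl⟩ :=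
    exists_addRectangle_eq (rowLen_eq_zero_of_numSSYT_ne_zero hssyt) hsup
  rw [card_addRectangle, add_right_inj] at hcard
  exact ⟨ν, mem_boundedShapes.2 ⟨hcard, hν⟩, rfl⟩

lemma Eword_indSup_mul (n p k : ℕ) (g : YoungDiagram → ℝ) :
    Eword (p * (n - p) + k) p (fun μ => indSup n p μ * g μ) =
      ∑ ν ∈ boundedShapes p k, Pword (p * (n - p) + k) p (addRectangle p (n - p) ν) *
        g (addRectangle p (n - p) ν) := by
  rw [Eword, tsum_eq_sum (s := (boundedShapes p k).map ⟨_, addRectangle_injective p (n - p)⟩),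
    sum_map]
  · refine sum_congr rfl fun ν hν => ?_
    have hcard : (addRectangle p (n - p) ν).card = p * (n - p) + k := by
      rw [card_addRectangle, (mem_boundedShapes.1 hν).1]
    simp [hcard, indSup_addRectangle]
  · intro μ hμ
    by_contra! hne
    obtain ⟨hcard, hne⟩ := ite_ne_right_iff.1 hne
    exact hμ (mem_map.2 (exists_addRectangle_eq_of_ne_zero hcard (hcard ▸ hne)))

lemma Eword_indSup_mul_Hstrip {n p q : ℕ} (k : ℕ) (hpq : p ≤ q) (hqn : q ≤ n) :
    Eword (p * (n - p) + k) p (fun μ => indSup n p μ * Hstrip n p q μ) =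
      ∑ ν ∈ boundedShapes p k,
        (p * (n - p) + k)! / (p ^ (p * (n - p) + k) *
          ∏ i ∈ range p, (n - p + beta p ν.rowLen i)! : ℝ) *
        (numSSYT ν p * numSSYT ν q * ∏ i ∈ range p, (q - 1 - i)!) := by
  rw [Eword_indSup_mul]
  refine sum_congr rfl fun ν hν => ?_
  obtain ⟨hcard, hν⟩ := mem_boundedShapes.1 hν
  rw [Pword_mul_Hstrip_addRectangle _ hpq hqn hν, hcard]

/-! ### Stirling asymptotics -/

section Asymptotics

open scoped Asymptotics

lemma tendsto_rpow_mul_iff_isEquivalent {u : ℕ → ℝ} {C : ℝ} (hC : C ≠ 0) (e : ℝ) :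
    Tendsto (fun n : ℕ => (n : ℝ) ^ e * u n) atTop (𝓝 C) ↔
      u ~[atTop] fun n => C * (n : ℝ) ^ (-e) := by
  have hcancel : ∀ᶠ n : ℕ in atTop, (n : ℝ) ^ e * (n : ℝ) ^ (-e) = 1 := by
    filter_upwards [eventually_gt_atTop 0] with n hn
    rw [← rpow_add (by exact_mod_cast hn), add_neg_cancel, rpow_zero]
  rw [← Asymptotics.isEquivalent_const_iff_tendsto hC]
  constructor <;> intro h
  · refine (h.mul (.refl (u := fun n : ℕ => (n : ℝ) ^ (-e)))).congr_left ?_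
    filter_upwards [hcancel] with n hn
    simp only [Pi.mul_apply]
    linear_combination u n * hn
  · refine ((Asymptotics.IsEquivalent.refl (u := fun n : ℕ => (n : ℝ) ^ e)).mul h).congr_right ?_
    filter_upwards [hcancel] with n hn
    simp only [Pi.mul_apply, Function.const_apply]
    linear_combination C * hn

lemma natCast_add_const_isEquivalent (c : ℝ) :
    (fun N : ℕ => N + c) ~[atTop] fun N => (N : ℝ) :=
  Asymptotics.IsEquivalent.refl.add_const_of_norm_tendsto_atTop
    (tendsto_norm_atTop_atTop.comp tendsto_natCast_atTop_atTop)

lemma natCast_sub_isEquivalent (p : ℕ) :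
    (fun n : ℕ => ((n - p : ℕ) : ℝ)) ~[atTop] fun n => (n : ℝ) := by
  refine (natCast_add_const_isEquivalent (-p)).congr_left ?_
  filter_upwards [eventually_ge_atTop p] with n hn
  rw [Nat.cast_sub hn, sub_eq_add_neg]

lemma factorial_add_isEquivalent (a : ℕ) :
    (fun N => (N + a)! : ℕ → ℝ) ~[atTop] fun N => N ! * (N : ℝ) ^ a := by
  induction a with
  | zero => simpa using Asymptotics.IsEquivalent.refl
  | succ a ih =>
    refine ((natCast_add_const_isEquivalent (a + 1)).mul ih).congr_left (.of_forall fun N => ?_)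
      |>.congr_right (.of_forall fun N => ?_)
    · simp only [Pi.mul_apply, ← add_assoc, Nat.factorial_succ]
      push_cast
      ring
    · simp only [Pi.mul_apply]
      ring

lemma tendsto_mul_left_atTop {p : ℕ} (hp : 1 ≤ p) : Tendsto (fun N : ℕ => p * N) atTop atTop :=
  tendsto_id.const_mul_atTop' hp

lemma stirling_mul_eq (p : ℕ) {N : ℕ} (hN : 0 < N) :
    √(2 * (p * N : ℕ) * π) * ((p * N : ℕ) / exp 1) ^ (p * N) =
      √p / (2 * π) ^ (((p : ℝ) - 1) / 2) * (N : ℝ) ^ (-(((p : ℝ) - 1) / 2)) * p ^ (p * N) *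
        (√(2 * N * π) * (N / exp 1) ^ N) ^ p := by
  have hN' : (0 : ℝ) < N := by exact_mod_cast hN
  have sqrt_pow : √(2 * N * π) ^ p = √(2 * N * π) *
      ((2 * π) ^ (((p : ℝ) - 1) / 2) * (N : ℝ) ^ (((p : ℝ) - 1) / 2)) := by
    rw [← mul_rpow (by positivity) hN'.le, mul_right_comm 2 π, sqrt_eq_rpow, ← rpow_natCast,
      ← rpow_mul (by positivity), ← rpow_add (by positivity)]
    ring_nf
  have sqrt_mul_nat : √(2 * (p * N : ℕ) * π) = √p * √(2 * N * π) := by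
    rw [← sqrt_mul p.cast_nonneg]
    push_cast
    ring_nf
  have base_pow : (((p * N : ℕ) : ℝ) / exp 1) ^ (p * N) = p ^ (p * N) * ((N / exp 1) ^ N) ^ p := by
    rw [← pow_mul, mul_comm N p, ← mul_pow, Nat.cast_mul, mul_div_assoc]
  rw [sqrt_mul_nat, base_pow, mul_pow, sqrt_pow, rpow_neg hN'.le]
  field_simp

lemma factorial_mul_isEquivalent {p : ℕ} (hp : 1 ≤ p) :
    (fun N => (p * N)! : ℕ → ℝ) ~[atTop] fun N =>
      √p / (2 * π) ^ (((p : ℝ) - 1) / 2) * (N : ℝ) ^ (-(((p : ℝ) - 1) / 2)) * p ^ (p * N) *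
        (N ! : ℝ) ^ p := by
  have stirling_mul :=
    Stirling.factorial_isEquivalent_stirling.comp_tendsto (tendsto_mul_left_atTop hp)
  have stirling_pow := (Stirling.factorial_isEquivalent_stirling.pow p).symm
  refine (stirling_mul.congr_right ?_).trans (.mul .refl stirling_pow)
  filter_upwards [eventually_gt_atTop 0] with N hN using stirling_mul_eq p hN

lemma prod_factorial_add_isEquivalent (p : ℕ) (a : ℕ → ℕ) :
    (fun N => (∏ i ∈ range p, (N + a i)! : ℕ) : ℕ → ℝ) ~[atTop]
      fun N => (N ! : ℝ) ^ p * (N : ℝ) ^ ∑ i ∈ range p, a i := by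
  have factors := Asymptotics.IsEquivalent.finsetProd fun i (_ : i ∈ range p) =>
    factorial_add_isEquivalent (a i)
  simpa only [Nat.cast_prod, prod_mul_distrib, prod_const, card_range, prod_pow_eq_pow_sum]
    using factors

lemma factorial_div_prod_factorial_isEquivalent {p k : ℕ} (hp : 1 ≤ p) {a : ℕ → ℕ}
    (ha : ∑ i ∈ range p, a i = k + ∑ i ∈ range p, i) :
    (fun N : ℕ => (p * N + k)! / (p ^ (p * N + k) * ∏ i ∈ range p, (N + a i)! : ℝ)) ~[atTop]
      fun N => √p / (2 * π) ^ (((p : ℝ) - 1) / 2) * (N : ℝ) ^ (-(((p : ℝ) ^ 2 - 1) / 2)) := by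
  have numerator := ((factorial_add_isEquivalent k).comp_tendsto (tendsto_mul_left_atTop hp)).trans
    ((factorial_mul_isEquivalent hp).mul .refl)
  have denominator := (Asymptotics.IsEquivalent.refl (u := fun N : ℕ => (p : ℝ) ^ (p * N + k))).mul
    (prod_factorial_add_isEquivalent p a)
  refine (numerator.div denominator).congr_right ?_
  filter_upwards [eventually_gt_atTop 0] with N hN
  have hN' : (0 : ℝ) < N := by exact_mod_cast hN
  have : (0 : ℝ) < p := by exact_mod_cast hp
  have exponent : (N : ℝ) ^ (-(((p : ℝ) - 1) / 2)) =
      (N : ℝ) ^ (-(((p : ℝ) ^ 2 - 1) / 2)) * (N : ℝ) ^ ∑ i ∈ range p, i := by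
    have gauss : ((∑ i ∈ range p, i : ℕ) : ℝ) * 2 = p * (p - 1) := by
      rw [← Nat.cast_pred hp]
      exact_mod_cast sum_range_id_mul_two p
    rw [← rpow_natCast (N : ℝ), ← rpow_add hN']
    congr 1
    linear_combination (-1 / 2) * gauss
  simp only [Pi.div_apply, Pi.mul_apply, ha, exponent]
  push_cast
  field_simp
  ring

lemma tendsto_rpow_mul_factorial_div_prod_factorial {p k : ℕ} (hp : 1 ≤ p) {a : ℕ → ℕ}
    (ha : ∑ i ∈ range p, a i = k + ∑ i ∈ range p, i) :
    Tendsto (fun n : ℕ => (n : ℝ) ^ (((p : ℝ) ^ 2 - 1) / 2) *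
        ((p * (n - p) + k)! / (p ^ (p * (n - p) + k) * ∏ i ∈ range p, (n - p + a i)!)))
      atTop (𝓝 (√p / (2 * π) ^ (((p : ℝ) - 1) / 2))) := by
  have : (0 : ℝ) < p := by exact_mod_cast hp
  rw [tendsto_rpow_mul_iff_isEquivalent (by positivity)]
  exact ((factorial_div_prod_factorial_isEquivalent hp ha).comp_tendsto
    (tendsto_sub_atTop_nat p)).trans
    (.mul .refl ((natCast_sub_isEquivalent p).rpow fun n => n.cast_nonneg))

end Asymptotics

lemma sum_beta_of_mem_boundedShapes {p k : ℕ} {ν : YoungDiagram} (hν : ν ∈ boundedShapes p k) :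
    ∑ i ∈ range p, beta p ν.rowLen i = k + ∑ i ∈ range p, i := by
  obtain ⟨rfl, hrow⟩ := mem_boundedShapes.1 hν
  have hsupp : (rowLens ν).support ⊆ range p := fun i hi => mem_range.2 <| by
    by_contra! hpi
    exact Finsupp.mem_support_iff.1 hi (rowLen_eq_zero_of_le hrow hpi)
  simp only [beta, sum_add_distrib]
  rw [sum_range_reflect (fun i => i), ← degree_rowLens, Finsupp.degree_apply,
    sum_subset hsupp fun i _ hi => Finsupp.notMem_support_iff.1 hi]
  rfl

lemma tendsto_rpow_mul_Eword {p q : ℕ} (k : ℕ) (hp : 1 ≤ p) (hpq : p ≤ q) :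
    Tendsto (fun n : ℕ => (n : ℝ) ^ (((p : ℝ) ^ 2 - 1) / 2) *
        Eword (p * (n - p) + k) p (fun μ => indSup n p μ * Hstrip n p q μ))
      atTop (𝓝 (√p * (∏ i ∈ range p, (q - 1 - i)!) / (2 * π) ^ (((p : ℝ) - 1) / 2) *
        Nat.multichoose (p * q) k)) := by
  have hterms := tendsto_finsetSum (boundedShapes p k) fun ν hν =>
    (tendsto_rpow_mul_factorial_div_prod_factorial hp
      (sum_beta_of_mem_boundedShapes hν)).mul_const
      (numSSYT ν p * numSSYT ν q * ∏ i ∈ range p, (q - 1 - i)! : ℝ)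
  convert hterms.congr' ?_ using 2
  · rw [← sum_numSSYT_mul_numSSYT, ← mul_sum, ← sum_mul]
    push_cast
    ring
  · filter_upwards [eventually_ge_atTop q] with n hn
    rw [Eword_indSup_mul_Hstrip k hpq hn, mul_sum]
    exact sum_congr rfl fun ν _ => mul_assoc _ _ _

/-! ### Moments of the chi-square distribution -/

section ChiSquare

open ProbabilityTheory

lemma pochRe_succ (x : ℝ) (m : ℕ) : pochRe x (m + 1) = pochRe x m * (x + m) :=
  prod_range_succ _ _

lemma pochRe_natCast (n k : ℕ) : pochRe n k = n.ascFactorial k := by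
  rw [pochRe, Nat.ascFactorial_eq_prod_range]
  push_cast
  rfl

lemma pochRe_add (x y : ℝ) (k : ℕ) :
    pochRe (x + y) k = ∑ ij ∈ antidiagonal k, k.choose ij.1 * (pochRe x ij.1 * pochRe y ij.2) := by
  induction k with
  | zero => simp [pochRe]
  | succ k ih =>
    rw [sum_antidiagonal_choose_succ_mul (fun i j => pochRe x i * pochRe y j), pochRe_succ, ih,
      sum_mul, ← sum_add_distrib]
    refine sum_congr rfl fun ij hij => ?_
    rw [← mem_antidiagonal.1 hij, Nat.choose_symm_add, pochRe_succ, pochRe_succ]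
    push_cast
    ring

lemma Gamma_add_natCast {x : ℝ} (hx : 0 < x) (r : ℕ) :
    Gamma (x + r) = pochRe x r * Gamma x := by
  induction r with
  | zero => simp [pochRe]
  | succ r ih =>
    rw [Nat.cast_succ, ← add_assoc, Gamma_add_one (by positivity), ih, pochRe_succ]
    ring

/-- All moments of `X` agree with those of a Gamma variable of shape `a` and rate `1`. For half a
chi-square variable with `m` degrees of freedom, `a = m / 2`. -/
def HasGammaMoments {Ω : Type*} [MeasurableSpace Ω] (μ : Measure Ω) (X : Ω → ℝ) (a : ℝ) : Prop :=
  ∀ k : ℕ, Integrable (fun ω => X ω ^ k) μ ∧ ∫ ω, X ω ^ k ∂μ = pochRe a k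

/- By the Vandermonde identity `pochRe_add`, shapes of independent variables add up. -/
lemma HasGammaMoments.add_prod {Ω Ω' : Type*} [MeasurableSpace Ω] [MeasurableSpace Ω']
    {μ : Measure Ω} {ν : Measure Ω'} [SFinite μ] [SFinite ν] {X : Ω → ℝ} {Y : Ω' → ℝ} {a b : ℝ}
    (hX : HasGammaMoments μ X a) (hY : HasGammaMoments ν Y b) :
    HasGammaMoments (μ.prod ν) (fun ω => X ω.1 + Y ω.2) (a + b) := by
  intro k
  have hterm (ij : ℕ × ℕ) : Integrable
      (fun ω : Ω × Ω' => k.choose ij.1 * (X ω.1 ^ ij.1 * Y ω.2 ^ ij.2)) (μ.prod ν) :=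
    ((hX ij.1).1.mul_prod (hY ij.2).1).const_mul _
  have hexpand (ω : Ω × Ω') : (X ω.1 + Y ω.2) ^ k =
      ∑ ij ∈ antidiagonal k, k.choose ij.1 * (X ω.1 ^ ij.1 * Y ω.2 ^ ij.2) := by
    simp only [(Commute.all (X ω.1) (Y ω.2)).add_pow', nsmul_eq_mul]
  simp only [hexpand]
  refine ⟨integrable_finsetSum _ fun ij _ => hterm ij, ?_⟩
  rw [integral_finsetSum _ fun ij _ => hterm ij, pochRe_add]
  refine sum_congr rfl fun ij _ => ?_
  rw [integral_const_mul, integral_prod_mul (fun ω => X ω ^ ij.1) (fun ω => Y ω ^ ij.2),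
    (hX ij.1).2, (hY ij.2).2]

lemma HasGammaMoments.comp {Ω Ω' : Type*} [MeasurableSpace Ω] [MeasurableSpace Ω']
    {μ : Measure Ω} {ν : Measure Ω'} {X : Ω' → ℝ} {a : ℝ} (hX : HasGammaMoments ν X a)
    {e : Ω ≃ᵐ Ω'} (he : MeasurePreserving e μ ν) : HasGammaMoments μ (X ∘ e) a := fun k =>
  ⟨(he.integrable_comp_emb e.measurableEmbedding).2 (hX k).1,
    (he.integral_comp e.measurableEmbedding fun ω => X ω ^ k).trans (hX k).2⟩

lemma integral_Ioi_sq_div_two_pow_mul_exp (r : ℕ) :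
    ∫ x in Set.Ioi (0 : ℝ), (x ^ 2 / 2) ^ r * exp (-x ^ 2 / 2) =
      √2 / 2 * (pochRe (1 / 2) r * √π) := by
  have hint : ∀ x : ℝ, (x ^ 2 / 2) ^ r * exp (-x ^ 2 / 2) =
      (1 / 2) ^ r * (x ^ (2 * r : ℝ) * exp (-(1 / 2) * x ^ (2 : ℝ))) := by
    intro x
    rw [rpow_two, show (2 * r : ℝ) = (2 * r : ℕ) by push_cast; rfl, rpow_natCast, pow_mul,
      ← mul_assoc, ← mul_pow]
    ring_nf
  have hpow : (1 / 2 : ℝ) ^ (-(2 * r + 1 : ℝ) / 2) = 2 ^ r * √2 := by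
    rw [one_div, inv_rpow two_pos.le, ← rpow_neg two_pos.le, sqrt_eq_rpow, ← rpow_natCast,
      ← rpow_add two_pos]
    ring_nf
  have hGamma : Gamma ((2 * r + 1 : ℝ) / 2) = pochRe (1 / 2) r * √π := by
    rw [← Gamma_one_half_eq, ← Gamma_add_natCast one_half_pos]
    ring_nf
  simp only [hint]
  rw [integral_const_mul, integral_rpow_mul_exp_neg_mul_rpow two_pos
    (neg_one_lt_zero.trans_le (by positivity)) one_half_pos, hpow, hGamma, one_div, inv_pow]
  field_simp

lemma hasGammaMoments_gaussianReal :
    HasGammaMoments (gaussianReal 0 1) (fun x => x ^ 2 / 2) (1 / 2) := by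
  intro r
  constructor
  · have hpow : (fun x : ℝ => (x ^ 2 / 2) ^ r) = fun x => (1 / 2) ^ r * ‖id x‖ ^ (2 * r) := by
      ext x
      rw [pow_mul, id, norm_eq_abs, sq_abs, ← mul_pow]
      ring_nf
    have hmem := memLp_id_gaussianReal (μ := 0) (v := 1) ((2 * r : ℕ) : NNReal)
    rw [hpow]
    exact .const_mul (by simpa using hmem.integrable_norm_pow') _
  · have hdensity : ∀ x : ℝ, gaussianPDFReal 0 1 x • (x ^ 2 / 2) ^ r =
        (√(2 * π))⁻¹ * ((|x| ^ 2 / 2) ^ r * exp (-|x| ^ 2 / 2)) := by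
      intro x
      rw [gaussianPDFReal, sq_abs]
      simp only [NNReal.coe_one, mul_one, sub_zero, smul_eq_mul]
      ring
    rw [integral_gaussianReal_eq_integral_smul one_ne_zero]
    simp only [hdensity]
    rw [integral_const_mul,
      integral_comp_abs (f := fun x => (x ^ 2 / 2) ^ r * exp (-x ^ 2 / 2)),
      integral_Ioi_sq_div_two_pow_mul_exp, sqrt_mul two_pos.le]
    field_simp

lemma hasGammaMoments_pi_gaussianReal (m : ℕ) :
    HasGammaMoments (Measure.pi fun _ : Fin m => gaussianReal 0 1)
      (fun x => (∑ i, x i ^ 2) / 2) (m / 2) := by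
  induction m with
  | zero =>
    intro k
    cases k <;> simp [pochRe, prod_range_succ']
  | succ m ih =>
    have hsplit := (hasGammaMoments_gaussianReal.add_prod ih).comp
      (measurePreserving_piFinSuccAbove (fun _ : Fin (m + 1) => gaussianReal 0 1) 0)
    convert hsplit using 1
    · ext x
      rw [Fin.sum_univ_succ, add_div]
      rfl
    · push_cast
      ring

lemma chiHalfMoment_two_mul (p q k : ℕ) :
    chiHalfMoment (2 * p * q) k = k ! * Nat.multichoose (p * q) k := by
  have hhalf : ((2 * p * q : ℕ) : ℝ) / 2 = (p * q : ℕ) := by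
    push_cast
    ring
  rw [chiHalfMoment, (hasGammaMoments_pi_gaussianReal _ k).2, hhalf, pochRe_natCast,
    Nat.ascFactorial_eq_factorial_mul_choose', Nat.multichoose_eq, Nat.cast_mul]

end ChiSquare

lemma prod_Icc_factorial_sub (p q : ℕ) :
    ∏ j ∈ Icc 1 p, (q - j)! = ∏ i ∈ range p, (q - 1 - i)! := by
  have hIcc : Icc 1 p = Ico (0 + 1) (p + 1) := by
    ext
    simp
  rw [hIcc, ← prod_Ico_add' (fun j => (q - j)!) 0 p 1, ← range_eq_Ico]
  exact prod_congr rfl fun i _ => by rw [Nat.sub_sub, add_comm]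

lemma multichoose_eq_choose_pred_add {m : ℕ} (hm : 1 ≤ m) (k : ℕ) :
    m.multichoose k = (m - 1 + k).choose k := by
  rw [Nat.multichoose_eq, ← Nat.sub_add_comm hm]

end StripHook

/-- asymptotics of `E^{p(n−p)+k,p}(1_{λ⊇μ} H(λ))` as `n → ∞`,
in terms of the `k`-th moment of `½ χ²_{2pq}`. -/
theorem statement2 (p q k : ℕ) (hp : 1 ≤ p) (hpq : p ≤ q) :
    Filter.Tendsto
      (fun n : ℕ => (n : ℝ) ^ (((p : ℝ) ^ 2 - 1) / 2) *
        Eword (p * (n - p) + k) p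
          (fun lam => indSup n p lam * (Hstrip n p q lam : ℝ)))
      Filter.atTop
      (nhds (Real.sqrt p * (∏ j ∈ Finset.Icc 1 p, (Nat.factorial (q - j) : ℝ)) /
        ((2 * Real.pi) ^ (((p : ℝ) - 1) / 2) * (Nat.factorial k : ℝ)) *
        chiHalfMoment (2 * p * q) k)) ∧
    Asymptotics.IsEquivalent Filter.atTop
      (fun n : ℕ =>
        Eword (p * (n - p) + k) p
          (fun lam => indSup n p lam * (Hstrip n p q lam : ℝ)))
      (fun n : ℕ =>
        (Real.sqrt p * (∏ j ∈ Finset.Icc 1 p, (Nat.factorial (q - j) : ℝ)) /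
          (2 * Real.pi) ^ (((p : ℝ) - 1) / 2) *
          (Nat.choose (p * q - 1 + k) k : ℝ)) *
        (n : ℝ) ^ (-(((p : ℝ) ^ 2 - 1) / 2))) := by
  have hlim := StripHook.tendsto_rpow_mul_Eword k hp hpq
  rw [StripHook.multichoose_eq_choose_pred_add (Nat.mul_pos hp (hp.trans hpq)),
    ← StripHook.prod_Icc_factorial_sub, Nat.cast_prod] at hlim
  constructor
  · convert hlim using 2
    rw [StripHook.chiHalfMoment_two_mul,
      StripHook.multichoose_eq_choose_pred_add (Nat.mul_pos hp (hp.trans hpq))]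
    field_simp
  · refine (StripHook.tendsto_rpow_mul_iff_isEquivalent ?_ _).1 hlim
    have hchoose : 0 < (p * q - 1 + k).choose k := Nat.choose_pos (Nat.le_add_left k _)
    positivity

end
end

section
/- Fix integers p ≥ 1 and k ≥ 0. Then lim_{N→∞} N^{(p²−1)/2} · P^{Np+k, p}( λ_p ≥ N ) = ( √p · ∏_{j=1}^p (p−j)! ) / ( (2π)^{(p−1)/2} · k! ) · E( (½ Z_{2p²})^k ), where P^{Np+k,p}(λ_p ≥ N) is the probability that the p-th part of a random partition of Np+k (distributed according to P^{Np+k,p}) is at least N. Consequently P^{Np+k,p}(λ_p ≥ N) ∼ c_{p,p,k} · N^{−(p²−1)/2} as N → ∞, with c_{p,p,k} = ( √p ∏_{j=1}^p (p−j)! / (2π)^{(p−1)/2} ) · binom(p²−1+k, k). -/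
open MeasureTheory Filter Real
open scoped BigOperators Topology

noncomputable section

/-- The probability `P^{ℓ,p}(λ_p ≥ N)` that the `p`-th part of a random
partition of `ℓ` (under `P^{ℓ,p}`) is at least `N`. -/
def PwordTail (ℓ p N : ℕ) : ℝ :=
  ∑' μ : YoungDiagram, if μ.card = ℓ ∧ N ≤ μ.rowLen (p - 1) then Pword ℓ p μ else 0

/-!
Encode a partition `λ` with at most `p` parts by its strictly increasing shifted parts
`b = (λ_p, λ_{p-1} + 1, …, λ_1 + p - 1)`, and let `D b` be the determinant of the binomial
coefficients `b_i` choose `j`. Removing the largest entry from tableaux matches subtracting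
consecutive rows of this determinant, so `s_λ(1^p) = D b`. Also `h^λ · ∏ i! · D b = ∏ b_i!`, hence
`P^{ℓ,p}(λ) = (ℓ! / p^ℓ) · ∏ i! · (D b)² / ∏ b_i!`.

The event `λ_p ≥ N` means `b = a + N` with `a` strictly increasing, and for `ℓ = N p + k` the sum of
`a` does not depend on `N`. As `D` is translation invariant, the tail probability is a finite sum
over `a` of `(D a)²` times a quotient of factorials, whose Stirling limit is the same for all `a`.
By Cauchy–Binet, `∑ (D a)²` is a coefficient of the determinant of the power series
`∑ n, choose n i * choose n j * X ^ n`, that is, of `(1 - X)^{-p²}` up to a power of `X`; this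
binomial coefficient is the `k`-th moment of `½ χ²_{2p²}` divided by `k!`.
-/

section CauchyBinet

variable {R : Type*} [CommRing R] {p : ℕ}

/-- The strictly increasing `p`-tuples of natural numbers with sum `n`. -/
def strictMonoTuples (p n : ℕ) : Finset (Fin p → ℕ) :=
  {a ∈ Finset.piAntidiag Finset.univ n | StrictMono a}

lemma mem_strictMonoTuples {n : ℕ} {a : Fin p → ℕ} :
    a ∈ strictMonoTuples p n ↔ ∑ i, a i = n ∧ StrictMono a := by
  simp [strictMonoTuples, Finset.mem_piAntidiag]

/-- Each injective tuple is uniquely a permutation of a strictly increasing one. -/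
lemma sum_eq_sum_strictMono_sum_perm {α M : Type*} [LinearOrder α] [AddCommMonoid M]
    (S : Finset (Fin p → α)) (hS : ∀ a ∈ S, ∀ σ : Equiv.Perm (Fin p), a ∘ σ ∈ S)
    (F : (Fin p → α) → M) (hF : ∀ a, ¬ Function.Injective a → F a = 0) :
    ∑ a ∈ S, F a = ∑ a ∈ S with StrictMono a, ∑ σ : Equiv.Perm (Fin p), F (a ∘ σ) := by
  classical
  rw [← Finset.sum_filter_of_ne (p := Function.Injective) fun a _ => not_imp_comm.1 (hF a),
    ← Finset.sum_product']
  symm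
  refine Finset.sum_bij' (fun x _ => x.1 ∘ x.2)
    (fun a _ => (a ∘ Tuple.sort a, (Tuple.sort a)⁻¹)) ?_ ?_ ?_ ?_ ?_
  · rintro ⟨a, σ⟩ h
    simp only [Finset.mem_product, Finset.mem_filter] at h ⊢
    exact ⟨hS a h.1.1 σ, h.1.2.injective.comp σ.injective⟩
  · intro a h
    simp only [Finset.mem_product, Finset.mem_filter] at h ⊢
    exact ⟨⟨hS a h.1 _, (Tuple.monotone_sort a).strictMono_of_injective
      (h.2.comp (Tuple.sort a).injective)⟩, Finset.mem_univ _⟩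
  · rintro ⟨a, σ⟩ h
    simp only [Finset.mem_product, Finset.mem_filter] at h
    have hcancel : (a ∘ σ) ∘ (σ⁻¹ : Equiv.Perm (Fin p)) = a := by ext; simp
    have hsort : (a ∘ σ) ∘ Tuple.sort (a ∘ σ) = (a ∘ σ) ∘ (σ⁻¹ : Equiv.Perm (Fin p)) :=
      Tuple.unique_monotone (Tuple.monotone_sort _) (by rw [hcancel]; exact h.1.2.monotone)
    have hperm : Tuple.sort (a ∘ σ) = σ⁻¹ :=
      Equiv.ext fun i => (h.1.2.injective.comp σ.injective) (congrFun hsort i)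
    simp only [hperm, inv_inv, hcancel]
  · intro a _
    ext
    simp
  · intro _ _
    rfl

lemma coeff_prod_mk {ι : Type*} [Fintype ι] [DecidableEq ι] (f : ι → ℕ → R) (n : ℕ) :
    PowerSeries.coeff n (∏ i, PowerSeries.mk (f i)) =
      ∑ a ∈ Finset.piAntidiag Finset.univ n, ∏ i, f i (a i) := by
  rw [PowerSeries.coeff_prod]
  refine Finset.sum_equiv Finsupp.equivFunOnFinite (fun a => ?_) fun a _ => ?_
  · simp [Finset.mem_finsuppAntidiag, Finset.mem_piAntidiag]
  · simp

lemma coeff_det_mk_mul (A B : Matrix ℕ (Fin p) R) (n : ℕ) :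
    PowerSeries.coeff n (Matrix.of fun i j => PowerSeries.mk fun m => A m i * B m j).det =
      ∑ a ∈ Finset.piAntidiag Finset.univ n,
        (∏ i, A (a i) i) * (B.submatrix a id).det := by
  rw [← Matrix.det_transpose, Matrix.det_apply', map_sum]
  have coeff_term (σ : Equiv.Perm (Fin p)) : PowerSeries.coeff n
      (((Equiv.Perm.sign σ : ℤ) : PowerSeries R) *
        ∏ i, PowerSeries.mk fun m => A m i * B m (σ i)) =
      ∑ a ∈ Finset.piAntidiag Finset.univ n,
        (∏ i, A (a i) i) * ((Equiv.Perm.sign σ : ℤ) * ∏ i, B (a i) (σ i)) := by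
    rw [← map_intCast (PowerSeries.C (R := R)), PowerSeries.coeff_C_mul, coeff_prod_mk,
      Finset.mul_sum]
    refine Finset.sum_congr rfl fun a _ => ?_
    rw [Finset.prod_mul_distrib, mul_left_comm]
  simp only [Matrix.transpose_apply, Matrix.of_apply, coeff_term]
  rw [Finset.sum_comm]
  refine Finset.sum_congr rfl fun a _ => ?_
  rw [← Matrix.det_transpose, Matrix.det_apply', Finset.mul_sum]
  rfl

theorem coeff_det_mk_mul_eq_sum_strictMono (A B : Matrix ℕ (Fin p) R) (n : ℕ) :
    PowerSeries.coeff n (Matrix.of fun i j => PowerSeries.mk fun m => A m i * B m j).det =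
      ∑ a ∈ strictMonoTuples p n,
        (A.submatrix a id).det * (B.submatrix a id).det := by
  rw [coeff_det_mk_mul, sum_eq_sum_strictMono_sum_perm, strictMonoTuples]
  · refine Finset.sum_congr rfl fun a _ => ?_
    rw [Matrix.det_apply', Finset.sum_mul]
    refine Finset.sum_congr rfl fun σ _ => ?_
    have permute_rows : B.submatrix (a ∘ σ) id = (B.submatrix a id).submatrix σ id := rfl
    rw [permute_rows, Matrix.det_permute]
    simp only [Matrix.submatrix_apply, Function.comp_apply, id]
    ring
  · intro a ha σ
    simp only [Finset.mem_piAntidiag, Finset.mem_univ, implies_true, and_true] at ha ⊢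
    exact (Equiv.sum_comp σ a).trans ha
  · intro a ha
    obtain ⟨i, j, hij, hne⟩ := Function.not_injective_iff.1 ha
    rw [Matrix.det_zero_of_row_eq hne (by ext; simp [hij]), mul_zero]

end CauchyBinet

section BinomialGeneratingFunctions

/-- The generating function `∑ m, C(m, i) C(m, j) X ^ m`. -/
def chooseMulChooseSeries (i j : ℕ) : PowerSeries ℤ :=
  PowerSeries.mk fun m => (m.choose i : ℤ) * m.choose j

lemma chooseMulChooseSeries_comm (i j : ℕ) :
    chooseMulChooseSeries i j = chooseMulChooseSeries j i := by
  simp only [chooseMulChooseSeries, mul_comm]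

lemma one_sub_X_mul_chooseMulChooseSeries_zero_zero :
    (1 - PowerSeries.X) * chooseMulChooseSeries 0 0 = 1 := by
  ext (_ | n)
  · simp [chooseMulChooseSeries, sub_mul]
  · simp [chooseMulChooseSeries, sub_mul, PowerSeries.coeff_succ_X_mul, PowerSeries.coeff_one]

lemma one_sub_X_mul_chooseMulChooseSeries_zero_succ (j : ℕ) :
    (1 - PowerSeries.X) * chooseMulChooseSeries 0 (j + 1) =
      PowerSeries.X * chooseMulChooseSeries 0 j := by
  ext (_ | n)
  · simp [chooseMulChooseSeries, sub_mul]
  · simp [chooseMulChooseSeries, sub_mul, PowerSeries.coeff_succ_X_mul, Nat.choose_succ_succ]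

lemma one_sub_X_mul_chooseMulChooseSeries_succ_succ (i j : ℕ) :
    (1 - PowerSeries.X) * chooseMulChooseSeries (i + 1) (j + 1) =
      PowerSeries.X * (chooseMulChooseSeries i (j + 1) + chooseMulChooseSeries (i + 1) j +
        chooseMulChooseSeries i j) := by
  ext (_ | n)
  · simp [chooseMulChooseSeries, sub_mul]
  · simp only [chooseMulChooseSeries, sub_mul, one_mul, map_sub, map_add, PowerSeries.coeff_mk,
      PowerSeries.coeff_succ_X_mul, Nat.choose_succ_succ]
    push_cast
    ring

variable {R : Type*} [CommRing R] (x : R)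

/-- The coefficient of `y ^ k` in `(x + y) ^ i`. -/
def binomialCoeff (i k : ℕ) : R := i.choose k * x ^ (i - k)

lemma binomialCoeff_zero_right (i : ℕ) : binomialCoeff x i 0 = x ^ i := by
  simp [binomialCoeff]

lemma binomialCoeff_self (i : ℕ) : binomialCoeff x i i = 1 := by
  simp [binomialCoeff]

lemma binomialCoeff_eq_zero_of_lt {i k : ℕ} (h : i < k) : binomialCoeff x i k = 0 := by
  simp [binomialCoeff, Nat.choose_eq_zero_of_lt h]

lemma binomialCoeff_succ_succ (i k : ℕ) :
    binomialCoeff x (i + 1) (k + 1) = x * binomialCoeff x i (k + 1) + binomialCoeff x i k := by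
  rcases lt_or_ge i (k + 1) with h | h
  · simp [binomialCoeff, Nat.choose_succ_succ, Nat.choose_eq_zero_of_lt h]
  · obtain ⟨d, rfl⟩ := Nat.exists_eq_add_of_le h
    have h₁ : k + 1 + d + 1 - (k + 1) = d + 1 := by omega
    have h₂ : k + 1 + d - (k + 1) = d := by omega
    have h₃ : k + 1 + d - k = d + 1 := by omega
    simp only [binomialCoeff, Nat.choose_succ_succ, h₁, h₂, h₃]
    push_cast
    ring

/-- The `(i, j)` entry of `L D Lᵀ`, where `L = (binomialCoeff x i k)` is the lower unitriangular
matrix of binomial coefficients and `D` is diagonal with entries `x ^ k`. -/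
def binomialGram (i j : ℕ) : R :=
  ∑ k ∈ Finset.range (i + 1), binomialCoeff x i k * binomialCoeff x j k * x ^ k

variable {x} in
lemma binomialGram_eq_sum_range {i K : ℕ} (hK : i < K) (j : ℕ) : binomialGram x i j =
    ∑ k ∈ Finset.range K, binomialCoeff x i k * binomialCoeff x j k * x ^ k := by
  refine Finset.sum_subset (Finset.range_mono hK) fun k _ hk => ?_
  rw [binomialCoeff_eq_zero_of_lt x (by simpa using hk), zero_mul, zero_mul]

lemma binomialGram_comm (i j : ℕ) : binomialGram x i j = binomialGram x j i := by
  rw [binomialGram_eq_sum_range (Nat.lt_add_of_pos_right j.succ_pos),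
    binomialGram_eq_sum_range (K := i + (j + 1)) (by omega)]
  simp only [mul_comm]

lemma binomialGram_zero_left (j : ℕ) : binomialGram x 0 j = x ^ j := by
  simp [binomialGram, binomialCoeff_zero_right]

lemma binomialGram_succ_succ (i j : ℕ) : binomialGram x (i + 1) (j + 1) =
    x * binomialGram x i (j + 1) + x * binomialGram x (i + 1) j +
      (x - x ^ 2) * binomialGram x i j := by
  have hi : i < i + 1 + 1 := by omega
  suffices h : binomialGram x (i + 1) (j + 1) - x * binomialGram x i (j + 1)
      - x * binomialGram x (i + 1) j + x ^ 2 * binomialGram x i j = x * binomialGram x i j by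
    linear_combination h
  calc
    _ = ∑ k ∈ Finset.range (i + 1 + 1), (binomialCoeff x (i + 1) k - x * binomialCoeff x i k) *
          (binomialCoeff x (j + 1) k - x * binomialCoeff x j k) * x ^ k := by
      rw [binomialGram_eq_sum_range hi (j + 1), binomialGram_eq_sum_range hi j, binomialGram,
        binomialGram]
      simp only [Finset.mul_sum, ← Finset.sum_sub_distrib, ← Finset.sum_add_distrib]
      exact Finset.sum_congr rfl fun k _ => by ring
    _ = ∑ k ∈ Finset.range (i + 1),
          binomialCoeff x i k * binomialCoeff x j k * x ^ (k + 1) := by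
      simp only [Finset.sum_range_succ' _ (i + 1), binomialCoeff_succ_succ, add_sub_cancel_left,
        binomialCoeff_zero_right, pow_succ', sub_self, zero_mul, add_zero]
    _ = x * binomialGram x i j := by
      rw [binomialGram, Finset.mul_sum]
      exact Finset.sum_congr rfl fun k _ => by ring

lemma det_binomialGram (p : ℕ) :
    (Matrix.of fun i j : Fin p => binomialGram x i j).det = x ^ ∑ i : Fin p, (i : ℕ) := by
  set L : Matrix (Fin p) (Fin p) R := Matrix.of fun i k => binomialCoeff x i k with hL
  have det_L : L.det = 1 := by
    rw [Matrix.det_of_isLowerTriangular]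
    · simp [hL, binomialCoeff_self]
    · exact fun i j hij => binomialCoeff_eq_zero_of_lt x hij
  have gram_eq : (Matrix.of fun i j : Fin p => binomialGram x i j) =
      L * Matrix.diagonal (fun k : Fin p => x ^ (k : ℕ)) * L.transpose := by
    ext i j
    rw [Matrix.mul_apply, Matrix.of_apply, binomialGram_eq_sum_range i.2, Finset.sum_range]
    simp only [Matrix.mul_diagonal, Matrix.of_apply, Matrix.transpose_apply, hL, mul_right_comm]
  rw [gram_eq, Matrix.det_mul, Matrix.det_mul, Matrix.det_transpose, det_L, Matrix.det_diagonal,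
    Finset.prod_pow_eq_pow_sum, one_mul, mul_one]

lemma one_sub_X_pow_mul_chooseMulChooseSeries (i j : ℕ) :
    (1 - PowerSeries.X) ^ (i + j + 1) * chooseMulChooseSeries i j =
      binomialGram PowerSeries.X i j := by
  have zero_left (j : ℕ) : (1 - PowerSeries.X) ^ (0 + j + 1) * chooseMulChooseSeries 0 j =
      binomialGram PowerSeries.X 0 j := by
    rw [binomialGram_zero_left]
    induction j with
    | zero => simpa using one_sub_X_mul_chooseMulChooseSeries_zero_zero
    | succ j ih =>
      rw [pow_succ, mul_assoc, one_sub_X_mul_chooseMulChooseSeries_zero_succ, pow_succ, ← ih]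
      ring
  induction i generalizing j with
  | zero => exact zero_left j
  | succ i ih_i =>
    induction j with
    | zero =>
      rw [chooseMulChooseSeries_comm, binomialGram_comm, ← zero_left, add_zero, zero_add]
    | succ j ih_j =>
      rw [binomialGram_succ_succ, ← ih_j, ← ih_i (j + 1), ← ih_i j, pow_succ, mul_assoc,
        one_sub_X_mul_chooseMulChooseSeries_succ_succ]
      ring

lemma one_sub_X_pow_mul_det_chooseMulChooseSeries (p : ℕ) :
    (1 - PowerSeries.X) ^ (p ^ 2) *
        (Matrix.of fun i j : Fin p => chooseMulChooseSeries i j).det =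
      PowerSeries.X ^ ∑ i : Fin p, (i : ℕ) := by
  have gram_eq : (Matrix.of fun i j : Fin p => binomialGram (PowerSeries.X : PowerSeries ℤ) i j) =
      Matrix.diagonal (fun i : Fin p => (1 - PowerSeries.X) ^ ((i : ℕ) + 1)) *
        (Matrix.of fun i j : Fin p => chooseMulChooseSeries i j) *
        Matrix.diagonal (fun j : Fin p => (1 - PowerSeries.X) ^ (j : ℕ)) := by
    ext1 i j
    simp only [Matrix.mul_diagonal, Matrix.diagonal_mul, Matrix.of_apply,
      ← one_sub_X_pow_mul_chooseMulChooseSeries]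
    ring
  have sum_exponents : ∑ i : Fin p, ((i : ℕ) + 1) + ∑ i : Fin p, (i : ℕ) = p ^ 2 := by
    have h := Finset.sum_range_id_mul_two p
    rw [Finset.sum_add_distrib, ← Finset.sum_range (fun i => i)]
    cases p <;> simp at h ⊢
    nlinarith
  rw [← det_binomialGram, gram_eq, Matrix.det_mul, Matrix.det_mul, Matrix.det_diagonal,
    Matrix.det_diagonal, Finset.prod_pow_eq_pow_sum, Finset.prod_pow_eq_pow_sum, ← sum_exponents,
    pow_add]
  ring

end BinomialGeneratingFunctions

section BinomDet

variable {p : ℕ}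

/-- The determinant `det (C(aᵢ, j))`, a Vandermonde product divided by `∏ i!`. For
`a = shiftedParts p μ` it counts the semistandard tableaux of shape `μ`. -/
def binomDet (a : Fin p → ℕ) : ℤ :=
  (Matrix.of fun i j : Fin p => ((a i).choose j : ℤ)).det

theorem sum_binomDet_sq (hp : 0 < p) (k : ℕ) :
    ∑ a ∈ strictMonoTuples p (k + ∑ i : Fin p, (i : ℕ)),
      binomDet a ^ 2 = ((p ^ 2 - 1 + k).choose k : ℤ) := by
  set B : Matrix ℕ (Fin p) ℤ := Matrix.of fun m j => (m.choose j : ℤ)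
  have det_eq : (Matrix.of fun i j : Fin p => chooseMulChooseSeries i j).det =
      PowerSeries.X ^ (∑ i : Fin p, (i : ℕ)) *
        PowerSeries.mk fun n => ((p ^ 2 - 1 + n).choose (p ^ 2 - 1) : ℤ) := by
    have inv := PowerSeries.mk_add_choose_mul_one_sub_pow_eq_one (S := ℤ) (d := p ^ 2 - 1)
    rw [Nat.sub_add_cancel (Nat.one_le_pow _ _ hp)] at inv
    rw [← one_sub_X_pow_mul_det_chooseMulChooseSeries]
    linear_combination -(Matrix.of fun i j : Fin p => chooseMulChooseSeries i j).det * inv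
  have cauchy_binet := coeff_det_mk_mul_eq_sum_strictMono B B (k + ∑ i : Fin p, (i : ℕ))
  simp only [← pow_two] at cauchy_binet
  refine cauchy_binet.symm.trans ?_
  change PowerSeries.coeff _ (Matrix.of fun i j : Fin p => chooseMulChooseSeries i j).det = _
  rw [det_eq, PowerSeries.coeff_X_pow_mul, PowerSeries.coeff_mk, Nat.choose_symm_add]

lemma prod_factorial_mul_binomDet (a : Fin p → ℕ) :
    (∏ i : Fin p, ((i : ℕ).factorial : ℤ)) * binomDet a =
      ∏ i, ∏ j ∈ Finset.Ioi i, ((a j : ℤ) - a i) := by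
  rw [← Matrix.det_vandermonde,
    Matrix.det_eval_matrixOfPolynomials_eq_det_vandermonde (fun i => (a i : ℤ))
      (fun j => descPochhammer ℤ j) (fun j => descPochhammer_natDegree ℤ j)
      (fun j => monic_descPochhammer ℤ j), binomDet, ← Matrix.det_mul_row]
  congr 1
  ext i j
  simp only [Matrix.of_apply, descPochhammer_eval_eq_descFactorial,
    Nat.descFactorial_eq_factorial_mul_choose, Nat.cast_mul]

lemma binomDet_add_const (a : Fin p → ℕ) (N : ℕ) : binomDet (fun i => a i + N) = binomDet a := by
  have hne : (∏ i : Fin p, ((i : ℕ).factorial : ℤ)) ≠ 0 :=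
    Finset.prod_ne_zero_iff.2 fun i _ => mod_cast (i : ℕ).factorial_ne_zero
  refine mul_left_cancel₀ hne ?_
  simp only [prod_factorial_mul_binomDet, Nat.cast_add, add_sub_add_right_eq_sub]

lemma sum_Ico_choose_right {a b : ℕ} (h : a ≤ b) (j : ℕ) :
    ∑ m ∈ Finset.Ico a b, (m.choose j : ℤ) = b.choose (j + 1) - a.choose (j + 1) := by
  induction b, h using Nat.le_induction with
  | base => simp
  | succ b h ih =>
    rw [Finset.sum_Ico_succ_top h, ih, Nat.choose_succ_succ]
    push_cast
    ring

lemma det_of_sum_row {R ι κ : Type*} [CommRing R] [Fintype ι] [DecidableEq ι]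
    (s : ι → Finset κ) (f : κ → ι → R) :
    (Matrix.of fun i j => ∑ m ∈ s i, f m j).det =
      ∑ m ∈ Fintype.piFinset s, (Matrix.of fun i j => f (m i) j).det := by
  have rows : (Matrix.of fun i j => ∑ m ∈ s i, f m j) = fun i => ∑ m ∈ s i, f m := by
    ext i j
    simp
  rw [rows]
  exact (Matrix.detRowAlternating (n := ι) (R := R)).toMultilinearMap.map_sum_finset
    (fun _ => f) s

/-- The first column of `det (C(aᵢ, j))` is constant; subtracting consecutive rows leaves a
determinant of sums of binomial coefficients. -/
lemma binomDet_eq_sum_piFinset_Ico {q : ℕ} {a : Fin (q + 1) → ℕ} (ha : Monotone a) :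
    binomDet a =
      ∑ m ∈ Fintype.piFinset fun i : Fin q => Finset.Ico (a i.castSucc) (a i.succ),
        binomDet m := by
  set B : Matrix (Fin (q + 1)) (Fin (q + 1)) ℤ := Matrix.of fun i j =>
    Fin.cases (motive := fun _ => ℤ) ((a 0).choose j)
      (fun i => (a i.succ).choose j - (a i.castSucc).choose j) i
  have det_eq : binomDet a = B.det :=
    Matrix.det_eq_of_forall_row_eq_smul_add_pred (fun _ => 1) (fun j => by simp [B])
      (fun i j => by simp [B])
  have minor : B.submatrix Fin.succ Fin.succ =
      Matrix.of fun i j : Fin q =>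
        ∑ m ∈ Finset.Ico (a i.castSucc) (a i.succ), (m.choose j : ℤ) := by
    ext i j
    simp [B, sum_Ico_choose_right (ha i.castSucc_lt_succ.le)]
  rw [det_eq, Matrix.det_succ_column_zero, Fin.sum_univ_succ]
  simp only [Fin.succAbove_zero, minor,
    det_of_sum_row _ fun (m : ℕ) (j : Fin q) => (m.choose j : ℤ)]
  simp [B, binomDet]

end BinomDet

section ShiftedParts

variable {p : ℕ} {μ ν : YoungDiagram}

lemma lt_rowLen_iff_lt_colLen {i j : ℕ} : j < μ.rowLen i ↔ i < μ.colLen j := by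
  rw [← YoungDiagram.mem_iff_lt_rowLen, YoungDiagram.mem_iff_lt_colLen]

lemma eq_of_rowLen_eq (h : ∀ i, μ.rowLen i = ν.rowLen i) : μ = ν := by
  ext ⟨i, j⟩
  rw [YoungDiagram.mem_cells, YoungDiagram.mem_cells, YoungDiagram.mem_iff_lt_rowLen,
    YoungDiagram.mem_iff_lt_rowLen, h]

lemma rowLen_eq_zero_of_le (hμ : μ.rowLen p = 0) {i : ℕ} (hi : p ≤ i) : μ.rowLen i = 0 :=
  Nat.eq_zero_of_le_zero (hμ ▸ μ.rowLen_anti p i hi)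

lemma exists_rowLen_eq {f : ℕ → ℕ} (hf : Antitone f) (hp : f p = 0) :
    ∃ μ : YoungDiagram, ∀ i, μ.rowLen i = f i := by
  let μ : YoungDiagram :=
    { cells := {c ∈ Finset.range p ×ˢ Finset.range (f 0) | c.2 < f c.1}
      isLowerSet := by
        rintro ⟨i, j⟩ ⟨i', j'⟩ ⟨hi, hj⟩ hc
        simp only [Finset.coe_filter, Finset.mem_product, Finset.mem_range,
          Set.mem_ofPred_eq] at hi hj hc ⊢
        have := hf hi
        omega }
  refine ⟨μ, fun i => eq_of_forall_lt_iff fun j => ?_⟩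
  rw [← YoungDiagram.mem_iff_lt_rowLen, ← YoungDiagram.mem_cells]
  simp only [μ, Finset.mem_filter, Finset.mem_product, Finset.mem_range, and_iff_right_iff_imp]
  intro hj
  refine ⟨lt_of_not_ge fun hi => ?_, hj.trans_le (hf i.zero_le)⟩
  exact hj.not_ge ((hf hi).trans (hp ▸ j.zero_le))

/-- The strictly increasing tuple `λ_p < λ_{p-1} + 1 < ⋯ < λ₁ + p - 1` attached to a partition
`λ` with at most `p` parts. -/
def shiftedParts (p : ℕ) (μ : YoungDiagram) (i : Fin p) : ℕ := μ.rowLen i.rev + i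

lemma shiftedParts_strictMono (p : ℕ) (μ : YoungDiagram) : StrictMono (shiftedParts p μ) :=
  fun _ _ hij => add_lt_add_of_le_of_lt (μ.rowLen_anti _ _ (Fin.rev_le_rev.2 hij.le)) hij

lemma shiftedParts_injOn : Set.InjOn (shiftedParts p) {μ | μ.rowLen p = 0} := by
  refine fun μ hμ ν hν h => eq_of_rowLen_eq fun i => ?_
  rcases lt_or_ge i p with hi | hi
  · simpa [shiftedParts] using congrFun h (Fin.rev ⟨i, hi⟩)
  · rw [rowLen_eq_zero_of_le hμ hi, rowLen_eq_zero_of_le hν hi]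

lemma val_sub_val_le_of_strictMono {a : Fin p → ℕ} (ha : StrictMono a) {i j : Fin p}
    (hij : i ≤ j) : (j - i : ℕ) ≤ a j - a i := by
  have card_le := Finset.card_le_card_of_injOn a (s := Finset.Icc i j)
    (t := Finset.Icc (a i) (a j))
    (fun m hm => by simpa [ha.le_iff_le] using hm) ha.injective.injOn
  have := ha.monotone hij
  simp only [Fin.card_Icc, Nat.card_Icc] at card_le
  omega

lemma exists_shiftedParts_eq {a : Fin p → ℕ} (ha : StrictMono a) :
    ∃ μ : YoungDiagram, μ.rowLen p = 0 ∧ shiftedParts p μ = a := by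
  have le_apply (i : Fin p) : (i : ℕ) ≤ a i := by
    have := val_sub_val_le_of_strictMono ha (i := ⟨0, i.pos⟩) (j := i) (Nat.zero_le _)
    simp only at this
    omega
  let f (r : ℕ) : ℕ := if h : r < p then a (Fin.rev ⟨r, h⟩) - (Fin.rev ⟨r, h⟩ : ℕ) else 0
  have hf : Antitone f := by
    intro r s hrs
    by_cases hs : s < p
    · have hr := hrs.trans_lt hs
      have := val_sub_val_le_of_strictMono ha
        (Fin.rev_le_rev.2 hrs : Fin.rev ⟨s, hs⟩ ≤ Fin.rev ⟨r, hr⟩)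
      have := le_apply (Fin.rev ⟨s, hs⟩)
      have := ha.monotone (Fin.rev_le_rev.2 hrs : Fin.rev ⟨s, hs⟩ ≤ Fin.rev ⟨r, hr⟩)
      simp only [f, hs, hr, dif_pos]
      omega
    · simp [f, hs]
  obtain ⟨μ, hμ⟩ := exists_rowLen_eq hf (p := p) (by simp [f])
  refine ⟨μ, by simp [hμ, f], funext fun i => ?_⟩
  rw [shiftedParts, hμ]
  simp only [f, Fin.is_lt, dif_pos, Fin.eta, Fin.rev_rev, Nat.sub_add_cancel (le_apply i)]

lemma mem_cells_iff_of_rowLen_eq_zero (hμ : μ.rowLen p = 0) (c : ℕ × ℕ) :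
    c ∈ μ.cells ↔ c.1 ∈ Finset.range p ∧ c.2 ∈ Finset.range (μ.rowLen c.1) := by
  rw [YoungDiagram.mem_cells, ← c.eta, YoungDiagram.mem_iff_lt_rowLen, Finset.mem_range,
    Finset.mem_range, iff_and_self]
  exact fun hc => lt_of_not_ge fun hp => by simp [rowLen_eq_zero_of_le hμ hp] at hc

lemma card_add_sum_eq_sum_shiftedParts (hμ : μ.rowLen p = 0) :
    μ.card + ∑ i : Fin p, (i : ℕ) = ∑ i, shiftedParts p μ i := by
  have card_eq : μ.card = ∑ i : Fin p, μ.rowLen i := by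
    rw [YoungDiagram.card, Finset.card_eq_sum_ones, Finset.sum_finset_product _ _
      (fun i => Finset.range (μ.rowLen i)) (mem_cells_iff_of_rowLen_eq_zero hμ), Finset.sum_range]
    simp
  rw [card_eq, ← Equiv.sum_comp Fin.revPerm, ← Finset.sum_add_distrib]
  rfl

end ShiftedParts

section HookLengths

variable {p : ℕ} {μ : YoungDiagram}

lemma hookLen_strictAntiOn (μ : YoungDiagram) (r : ℕ) :
    StrictAntiOn (fun t => hookLen μ (r, t)) (Finset.range (μ.rowLen r)) := by
  intro t ht u hu htu
  simp only [Finset.coe_range, Set.mem_Iio] at ht hu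
  have := lt_rowLen_iff_lt_colLen.1 ht
  have := lt_rowLen_iff_lt_colLen.1 hu
  have := μ.colLen_anti t u htu.le
  simp only [hookLen]
  omega

lemma shiftedParts_sub_injOn (μ : YoungDiagram) (j : Fin p) :
    Set.InjOn (fun i => shiftedParts p μ j - shiftedParts p μ i) (Finset.Iio j) := by
  have hb := shiftedParts_strictMono p μ
  intro i hi i' hi' h
  have := hb (Finset.mem_Iio.1 hi)
  have := hb (Finset.mem_Iio.1 hi')
  exact hb.injective (by simp only at h; omega)

lemma hookLen_ne_shiftedParts_sub {i j : Fin p} (hij : i < j) {t : ℕ} (ht : t < μ.rowLen j.rev) :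
    hookLen μ (j.rev, t) ≠ shiftedParts p μ j - shiftedParts p μ i := by
  have := lt_rowLen_iff_lt_colLen.1 ht
  have := lt_rowLen_iff_lt_colLen (μ := μ) (i := i.rev) (j := t)
  have := μ.rowLen_anti _ _ (Fin.rev_le_rev.2 hij.le)
  simp only [hookLen, shiftedParts, Fin.val_rev] at *
  omega

lemma hookLen_mem_Ico (hμ : μ.rowLen p = 0) {j : Fin p} {t : ℕ} (ht : t < μ.rowLen j.rev) :
    hookLen μ (j.rev, t) ∈ Finset.Ico 1 (shiftedParts p μ j + 1) := by
  have := lt_rowLen_iff_lt_colLen.1 ht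
  have := lt_rowLen_iff_lt_colLen (μ := μ) (i := p) (j := t)
  simp only [hookLen, shiftedParts, Fin.val_rev, Finset.mem_Ico] at *
  omega

/-- The hook lengths of the row `j.rev` and the differences `b j - b i`, `i < j`, where
`b = shiftedParts p μ`, together run through `1, …, b j` exactly once. -/
lemma prod_hookLen_row_mul_prod_sub (hμ : μ.rowLen p = 0) (j : Fin p) :
    (∏ t ∈ Finset.range (μ.rowLen j.rev), hookLen μ (j.rev, t)) *
      ∏ i ∈ Finset.Iio j, (shiftedParts p μ j - shiftedParts p μ i) =
      (shiftedParts p μ j).factorial := by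
  set hooks := (Finset.range (μ.rowLen j.rev)).image fun t => hookLen μ (j.rev, t)
  set diffs := (Finset.Iio j).image fun i => shiftedParts p μ j - shiftedParts p μ i
  have hooks_injOn := (hookLen_strictAntiOn μ j.rev).injOn
  have diffs_injOn := shiftedParts_sub_injOn μ j
  have disjoint : Disjoint hooks diffs := by
    simp only [hooks, diffs, Finset.disjoint_left, Finset.mem_image, Finset.mem_range,
      Finset.mem_Iio]
    rintro _ ⟨t, ht, rfl⟩ ⟨i, hi, h⟩
    exact hookLen_ne_shiftedParts_sub hi ht h.symm
  have subset : hooks ∪ diffs ⊆ Finset.Ico 1 (shiftedParts p μ j + 1) := by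
    simp only [hooks, diffs, Finset.union_subset_iff, Finset.image_subset_iff]
    refine ⟨fun t ht => hookLen_mem_Ico hμ (Finset.mem_range.1 ht), fun i hi => ?_⟩
    have := shiftedParts_strictMono p μ (Finset.mem_Iio.1 hi)
    simp only [Finset.mem_Ico]
    omega
  have union_eq : hooks ∪ diffs = Finset.Ico 1 (shiftedParts p μ j + 1) := by
    refine Finset.eq_of_subset_of_card_le subset ?_
    rw [Finset.card_union_of_disjoint disjoint, Finset.card_image_of_injOn hooks_injOn,
      Finset.card_image_of_injOn diffs_injOn]
    simp [shiftedParts]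
  rw [← Finset.prod_Ico_id_eq_factorial, ← union_eq, Finset.prod_union disjoint,
    Finset.prod_image hooks_injOn, Finset.prod_image diffs_injOn]

theorem hookProd_mul_binomDet_shiftedParts (hμ : μ.rowLen p = 0) :
    (hookProd μ : ℤ) * ((∏ i : Fin p, ((i : ℕ).factorial : ℤ)) * binomDet (shiftedParts p μ)) =
      ∏ i, ((shiftedParts p μ i).factorial : ℤ) := by
  have hookProd_eq : hookProd μ = ∏ j : Fin p,
      ∏ t ∈ Finset.range (μ.rowLen j.rev), hookLen μ (j.rev, t) := by
    rw [hookProd, Finset.prod_finset_product _ _ (fun i => Finset.range (μ.rowLen i))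
      (mem_cells_iff_of_rowLen_eq_zero hμ), Finset.prod_range, ← Equiv.prod_comp Fin.revPerm]
    rfl
  rw [prod_factorial_mul_binomDet, hookProd_eq,
    Finset.prod_comm' (t' := Finset.univ) (s' := Finset.Iio) (by simp), Nat.cast_prod,
    ← Finset.prod_mul_distrib]
  refine Finset.prod_congr rfl fun j _ => ?_
  rw [← prod_hookLen_row_mul_prod_sub hμ j, Nat.cast_mul, Nat.cast_prod _ (Finset.Iio j)]
  congr 1
  refine Finset.prod_congr rfl fun i hi => ?_
  rw [Nat.cast_sub (shiftedParts_strictMono p μ (Finset.mem_Iio.1 hi)).le]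

end HookLengths

section Tableaux

variable {p q : ℕ} {μ ν : YoungDiagram}

lemma row_le_entry (T : SemistandardYoungTableau μ) {i j : ℕ} (h : (i, j) ∈ μ) : i ≤ T i j := by
  induction i with
  | zero => exact Nat.zero_le _
  | succ i ih =>
    exact (ih (μ.up_left_mem i.le_succ le_rfl h)).trans_lt (T.col_strict i.lt_succ_self h)

lemma numSSYT_eq_zero (h : μ.rowLen q ≠ 0) : numSSYT μ q = 0 := by
  have hmem : (q, 0) ∈ μ := YoungDiagram.mem_iff_lt_rowLen.2 (Nat.pos_of_ne_zero h)
  have empty : {T : SemistandardYoungTableau μ | ∀ c ∈ μ.cells, T c.1 c.2 < q} = ∅ :=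
    Set.eq_empty_of_forall_notMem fun T hT => (row_le_entry T hmem).not_gt (hT (q, 0) hmem)
  rw [numSSYT, empty, Set.ncard_empty]

lemma ssyt_ext {T T' : SemistandardYoungTableau μ} (h : ∀ i j, (i, j) ∈ μ → T i j = T' i j) :
    T = T' := by
  ext i j
  by_cases hij : (i, j) ∈ μ
  · exact h i j hij
  · rw [T.zeros hij, T'.zeros hij]

lemma finite_setOf_entries_lt (μ : YoungDiagram) (q : ℕ) :
    {T : SemistandardYoungTableau μ | ∀ c ∈ μ.cells, T c.1 c.2 < q}.Finite := by
  refine Set.Finite.of_injOn (f := fun T (c : {c // c ∈ μ.cells}) => T c.1.1 c.1.2)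
    (t := Set.univ.pi fun _ => Set.Iio q) (fun T hT c _ => hT c.1 c.2) ?_
    (Set.Finite.pi fun _ => Set.finite_Iio q)
  exact fun T _ T' _ h => ssyt_ext fun i j hij => congrFun h ⟨(i, j), hij⟩

/-- The shape formed by the entries of `T` that are smaller than `q`. -/
def subShape (T : SemistandardYoungTableau μ) (q : ℕ) : YoungDiagram where
  cells := {c ∈ μ.cells | T c.1 c.2 < q}
  isLowerSet := by
    rintro ⟨i, j⟩ ⟨i', j'⟩ ⟨hi, hj⟩ hc
    simp only [Finset.coe_filter, Set.mem_ofPred_eq, YoungDiagram.mem_cells] at hi hj hc ⊢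
    have hmem : (i', j) ∈ μ := μ.up_left_mem hi le_rfl hc.1
    exact ⟨μ.up_left_mem le_rfl hj hmem,
      ((T.row_weak_of_le hj hmem).trans (T.col_weak hi hc.1)).trans_lt hc.2⟩

lemma mem_subShape {T : SemistandardYoungTableau μ} {i j : ℕ} :
    (i, j) ∈ subShape T q ↔ (i, j) ∈ μ ∧ T i j < q := by
  rw [← YoungDiagram.mem_cells, subShape, Finset.mem_filter, YoungDiagram.mem_cells]

lemma rowLen_subShape (T : SemistandardYoungTableau μ) (q : ℕ) : (subShape T q).rowLen q = 0 := by
  by_contra h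
  obtain ⟨hmem, hlt⟩ := mem_subShape.1
    (YoungDiagram.mem_iff_lt_rowLen.2 (Nat.pos_of_ne_zero h) : (q, 0) ∈ subShape T q)
  exact (row_le_entry T hmem).not_gt hlt

/-- `μ / ν` is a horizontal strip: `μ₁ ≥ ν₁ ≥ μ₂ ≥ ν₂ ≥ ⋯`. -/
def Interlaces (ν μ : YoungDiagram) : Prop :=
  ∀ i, μ.rowLen (i + 1) ≤ ν.rowLen i ∧ ν.rowLen i ≤ μ.rowLen i

namespace Interlaces

lemma mem_of_mem (h : Interlaces ν μ) {i j : ℕ} (hij : (i, j) ∈ ν) : (i, j) ∈ μ := by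
  rw [YoungDiagram.mem_iff_lt_rowLen] at hij ⊢
  exact hij.trans_le (h i).2

lemma mem_of_lt_of_mem (h : Interlaces ν μ) {i i' j : ℕ} (hi : i < i') (hij : (i', j) ∈ μ) :
    (i, j) ∈ ν := by
  rw [YoungDiagram.mem_iff_lt_rowLen] at hij ⊢
  exact hij.trans_le ((μ.rowLen_anti _ _ hi).trans (h i).1)

end Interlaces

lemma interlaces_subShape {T : SemistandardYoungTableau μ}
    (hT : ∀ c ∈ μ.cells, T c.1 c.2 < q + 1) : Interlaces (subShape T q) μ := by
  refine fun i => ⟨le_of_forall_lt fun j hj => ?_, le_of_forall_lt fun j hj => ?_⟩ <;>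
    rw [← YoungDiagram.mem_iff_lt_rowLen] at hj ⊢
  · exact mem_subShape.2 ⟨μ.up_left_mem i.le_succ le_rfl hj,
      (T.col_strict i.lt_succ_self hj).trans_le (Nat.le_of_lt_succ (hT _ hj))⟩
  · exact (mem_subShape.1 hj).1

open Classical in
/-- The entries of `T` in the cells of the subdiagram `ν`. -/
def restrictTo (ν : YoungDiagram) (hν : ∀ {i j}, (i, j) ∈ ν → (i, j) ∈ μ)
    (T : SemistandardYoungTableau μ) : SemistandardYoungTableau ν where
  entry i j := if (i, j) ∈ ν then T i j else 0
  row_weak' hj hmem := by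
    simpa only [hmem, ν.up_left_mem le_rfl hj.le hmem, if_true] using T.row_weak hj (hν hmem)
  col_strict' hi hmem := by
    simpa only [hmem, ν.up_left_mem hi.le le_rfl hmem, if_true] using T.col_strict hi (hν hmem)
  zeros' hmem := if_neg hmem

lemma restrictTo_apply (hν : ∀ {i j}, (i, j) ∈ ν → (i, j) ∈ μ) (T : SemistandardYoungTableau μ)
    {i j : ℕ} (h : (i, j) ∈ ν) : restrictTo ν hν T i j = T i j :=
  if_pos h

open Classical in
/-- Fill the cells of the horizontal strip `μ / ν` with the new largest entry `q`. -/
def fillStrip (h : Interlaces ν μ) (S : SemistandardYoungTableau ν)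
    (hS : ∀ c ∈ ν.cells, S c.1 c.2 < q) : SemistandardYoungTableau μ where
  entry i j := if (i, j) ∈ ν then S i j else if (i, j) ∈ μ then q else 0
  row_weak' {i j j'} hj hmem := by
    have hmem' : (i, j) ∈ μ := μ.up_left_mem le_rfl hj.le hmem
    by_cases hν' : (i, j') ∈ ν
    · simpa only [hν', ν.up_left_mem le_rfl hj.le hν', if_true] using S.row_weak hj hν'
    · by_cases hν : (i, j) ∈ ν
      · simpa only [hν, hν', hmem, if_true, if_false] using (hS (i, j) hν).le
      · simp only [hν, hν', hmem, hmem', if_true, if_false, le_rfl]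
  col_strict' {i i' j} hi hmem := by
    have hν : (i, j) ∈ ν := h.mem_of_lt_of_mem hi hmem
    by_cases hν' : (i', j) ∈ ν
    · simpa only [hν, hν', if_true] using S.col_strict hi hν'
    · simpa only [hν, hν', hmem, if_true, if_false] using hS (i, j) hν
  zeros' {i j} hmem := by
    rw [if_neg fun hν => hmem (h.mem_of_mem hν), if_neg hmem]

section FillStrip

variable (h : Interlaces ν μ) (S : SemistandardYoungTableau ν)
  (hS : ∀ c ∈ ν.cells, S c.1 c.2 < q)

lemma fillStrip_apply_of_mem {i j : ℕ} (hν : (i, j) ∈ ν) : fillStrip h S hS i j = S i j :=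
  if_pos hν

lemma fillStrip_apply_of_notMem {i j : ℕ} (hμ : (i, j) ∈ μ) (hν : (i, j) ∉ ν) :
    fillStrip h S hS i j = q :=
  (if_neg hν).trans (if_pos hμ)

lemma fillStrip_lt : ∀ c ∈ μ.cells, fillStrip h S hS c.1 c.2 < q + 1 := by
  rintro ⟨i, j⟩ hμ
  by_cases hν : (i, j) ∈ ν
  · rw [fillStrip_apply_of_mem h S hS hν]
    exact (hS (i, j) hν).trans q.lt_succ_self
  · rw [fillStrip_apply_of_notMem h S hS hμ hν]
    exact q.lt_succ_self

lemma subShape_fillStrip : subShape (fillStrip h S hS) q = ν := by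
  ext ⟨i, j⟩
  rw [YoungDiagram.mem_cells, YoungDiagram.mem_cells, mem_subShape]
  by_cases hν : (i, j) ∈ ν
  · simpa only [hν, h.mem_of_mem hν, fillStrip_apply_of_mem h S hS hν, true_and, iff_true]
      using hS (i, j) hν
  · simp only [hν, iff_false, not_and, not_lt]
    exact fun hμ => (fillStrip_apply_of_notMem h S hS hμ hν).ge

end FillStrip

lemma ncard_setOf_subShape_eq (h : Interlaces ν μ) :
    {T : SemistandardYoungTableau μ |
      (∀ c ∈ μ.cells, T c.1 c.2 < q + 1) ∧ subShape T q = ν}.ncard = numSSYT ν q := by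
  refine Set.ncard_congr (fun T _ => restrictTo ν h.mem_of_mem T) ?_ ?_ ?_
  · rintro T ⟨_, rfl⟩ ⟨i, j⟩ hij
    rw [restrictTo_apply _ _ hij]
    exact (mem_subShape.1 hij).2
  · rintro T T' ⟨hT, hTν⟩ ⟨hT', hTν'⟩ heq
    refine ssyt_ext fun i j hμ => ?_
    by_cases hν : (i, j) ∈ ν
    · rw [← restrictTo_apply h.mem_of_mem T hν, heq, restrictTo_apply _ _ hν]
    · have entry_eq (U : SemistandardYoungTableau μ) (hU : ∀ c ∈ μ.cells, U c.1 c.2 < q + 1)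
          (hUν : subShape U q = ν) : U i j = q :=
        le_antisymm (Nat.le_of_lt_succ (hU _ hμ))
          (not_lt.1 fun hlt => hν (hUν ▸ mem_subShape.2 ⟨hμ, hlt⟩))
      rw [entry_eq T hT hTν, entry_eq T' hT' hTν']
  · refine fun S hS => ⟨fillStrip h S hS, ⟨fillStrip_lt h S hS, subShape_fillStrip h S hS⟩, ?_⟩
    exact ssyt_ext fun i j hν => by
      rw [restrictTo_apply _ _ hν, fillStrip_apply_of_mem h S hS hν]

lemma interlaces_iff_shiftedParts_mem (hν : ν.rowLen q = 0) (hμ : μ.rowLen (q + 1) = 0) :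
    Interlaces ν μ ↔ shiftedParts q ν ∈ Fintype.piFinset fun i : Fin q =>
      Finset.Ico (shiftedParts (q + 1) μ i.castSucc) (shiftedParts (q + 1) μ i.succ) := by
  have at_rev (i : Fin q) :
      shiftedParts q ν i ∈ Finset.Ico (shiftedParts (q + 1) μ i.castSucc)
        (shiftedParts (q + 1) μ i.succ) ↔
      μ.rowLen (i.rev + 1) ≤ ν.rowLen i.rev ∧ ν.rowLen i.rev ≤ μ.rowLen i.rev := by
    simp only [shiftedParts, Fin.rev_castSucc, Fin.rev_succ, Fin.val_succ, Fin.val_castSucc,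
      Finset.mem_Ico]
    omega
  simp only [Fintype.mem_piFinset, at_rev]
  refine ⟨fun h i => h i.rev, fun h i => ?_⟩
  rcases lt_or_ge i q with hi | hi
  · simpa using h (Fin.rev ⟨i, hi⟩)
  · simp [rowLen_eq_zero_of_le hν hi, rowLen_eq_zero_of_le hμ (Nat.succ_le_succ hi)]

lemma strictMono_of_mem_piFinset_Ico {a : Fin (q + 1) → ℕ} {m : Fin q → ℕ}
    (hm : m ∈ Fintype.piFinset fun i : Fin q => Finset.Ico (a i.castSucc) (a i.succ)) :
    StrictMono m := by
  simp only [Fintype.mem_piFinset, Finset.mem_Ico] at hm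
  cases q with
  | zero => exact Subsingleton.strictMono m
  | succ q =>
    refine Fin.strictMono_iff_lt_succ.2 fun i => ?_
    exact (hm i.castSucc).2.trans_le (by simpa using (hm i.succ).1)

lemma numSSYT_succ (hμ : μ.rowLen (q + 1) = 0) {c : (Fin q → ℕ) → ℤ}
    (hc : ∀ ν : YoungDiagram, ν.rowLen q = 0 → (numSSYT ν q : ℤ) = c (shiftedParts q ν)) :
    (numSSYT μ (q + 1) : ℤ) = ∑ m ∈ Fintype.piFinset fun i : Fin q =>
      Finset.Ico (shiftedParts (q + 1) μ i.castSucc) (shiftedParts (q + 1) μ i.succ), c m := by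
  classical
  rw [numSSYT, Set.ncard_eq_toFinset_card _ (finite_setOf_entries_lt μ (q + 1)),
    Finset.card_eq_sum_card_fiberwise (f := fun T => shiftedParts q (subShape T q)), Nat.cast_sum]
  · refine Finset.sum_congr rfl fun m hm => ?_
    obtain ⟨ν, hν, rfl⟩ := exists_shiftedParts_eq (strictMono_of_mem_piFinset_Ico hm)
    rw [← hc ν hν, ← ncard_setOf_subShape_eq ((interlaces_iff_shiftedParts_mem hν hμ).2 hm),
      ← Set.ncard_coe_finset]
    congr 2
    ext T
    simp [shiftedParts_injOn.eq_iff (rowLen_subShape T q) hν]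
  · intro T hT
    rw [Set.Finite.coe_toFinset] at hT
    exact (interlaces_iff_shiftedParts_mem (rowLen_subShape T q) hμ).1 (interlaces_subShape hT)

lemma numSSYT_zero_right (hμ : μ.rowLen 0 = 0) : numSSYT μ 0 = 1 := by
  have notMem (c : ℕ × ℕ) : c ∉ μ.cells := by
    simp [mem_cells_iff_of_rowLen_eq_zero hμ]
  have eq_singleton : {T : SemistandardYoungTableau μ | ∀ c ∈ μ.cells, T c.1 c.2 < 0} =
      {SemistandardYoungTableau.highestWeight μ} := by
    ext T
    simp only [Set.mem_ofPred_eq, Set.mem_singleton_iff]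
    exact ⟨fun _ => ssyt_ext fun i j hij => (notMem _ hij).elim, fun _ c hc => (notMem c hc).elim⟩
  rw [numSSYT, eq_singleton, Set.ncard_singleton]

theorem numSSYT_eq_binomDet (hμ : μ.rowLen p = 0) :
    (numSSYT μ p : ℤ) = binomDet (shiftedParts p μ) := by
  induction p generalizing μ with
  | zero => simp [numSSYT_zero_right hμ, binomDet]
  | succ q ih =>
    rw [numSSYT_succ hμ fun ν hν => ih hν,
      binomDet_eq_sum_piFinset_Ico (shiftedParts_strictMono _ μ).monotone]

end Tableaux

section TailProbability

variable {p : ℕ} {μ : YoungDiagram}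

lemma Pword_eq_zero (hμ : μ.rowLen p ≠ 0) (n : ℕ) : Pword n p μ = 0 := by
  rw [Pword, numSSYT_eq_zero hμ, Nat.cast_zero, mul_zero, zero_div]

lemma prod_factorial_ne_zero (b : Fin p → ℕ) : ∏ i, ((b i).factorial : ℝ) ≠ 0 :=
  Finset.prod_ne_zero_iff.2 fun _ _ => Nat.cast_ne_zero.2 (Nat.factorial_ne_zero _)

lemma inv_hookProd_eq (hμ : μ.rowLen p = 0) :
    (hookProd μ : ℝ)⁻¹ = (∏ i : Fin p, ((i : ℕ).factorial : ℝ)) *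
      (binomDet (shiftedParts p μ) : ℝ) / ∏ i, ((shiftedParts p μ i).factorial : ℝ) := by
  have hook : (hookProd μ : ℝ) * ((∏ i : Fin p, ((i : ℕ).factorial : ℝ)) *
      (binomDet (shiftedParts p μ) : ℝ)) = ∏ i, ((shiftedParts p μ i).factorial : ℝ) := by
    exact_mod_cast hookProd_mul_binomDet_shiftedParts hμ
  have hne := prod_factorial_ne_zero (shiftedParts p μ)
  rw [eq_div_iff hne, ← hook, inv_mul_cancel_left₀]
  exact left_ne_zero_of_mul (hook ▸ hne)

lemma Pword_card_eq (hμ : μ.rowLen p = 0) :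
    Pword μ.card p μ = (μ.card.factorial : ℝ) / (p : ℝ) ^ μ.card *
      ((∏ i : Fin p, ((i : ℕ).factorial : ℝ)) * (binomDet (shiftedParts p μ) : ℝ) ^ 2) /
        ∏ i, ((shiftedParts p μ i).factorial : ℝ) := by
  have hnum : (numSSYT μ p : ℝ) = (binomDet (shiftedParts p μ) : ℝ) := by
    exact_mod_cast numSSYT_eq_binomDet hμ
  rw [Pword, fSYT, hnum, div_eq_mul_inv (μ.card.factorial : ℝ), inv_hookProd_eq hμ]
  ring

lemma sum_add_const_add (a : Fin p → ℕ) (N : ℕ) : ∑ i, (a i + N) = ∑ i, a i + N * p := by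
  simp [Finset.sum_add_distrib, mul_comm]

lemma le_shiftedParts_of_le_rowLen {N : ℕ} (hN : N ≤ μ.rowLen (p - 1)) (i : Fin p) :
    N ≤ shiftedParts p μ i :=
  (hN.trans (μ.rowLen_anti _ _ (Nat.le_sub_one_of_lt i.rev.isLt))).trans (Nat.le_add_right _ _)

lemma card_eq_and_le_rowLen_iff (hp : 0 < p) (hμ : μ.rowLen p = 0) (N k : ℕ) :
    μ.card = N * p + k ∧ N ≤ μ.rowLen (p - 1) ↔
      ∃ a ∈ strictMonoTuples p (k + ∑ i : Fin p, (i : ℕ)),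
        shiftedParts p μ = fun i => a i + N := by
  have hcard := card_add_sum_eq_sum_shiftedParts hμ
  constructor
  · rintro ⟨hn, hN⟩
    have hadd : shiftedParts p μ = fun i => shiftedParts p μ i - N + N :=
      funext fun i => (Nat.sub_add_cancel (le_shiftedParts_of_le_rowLen hN i)).symm
    refine ⟨fun i => shiftedParts p μ i - N, mem_strictMonoTuples.2 ⟨?_, fun i j hij => ?_⟩, hadd⟩
    · rw [hadd, sum_add_const_add] at hcard
      omega
    · exact Nat.sub_lt_sub_right (le_shiftedParts_of_le_rowLen hN i)
        (shiftedParts_strictMono p μ hij)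
  · rintro ⟨a, ha, haN⟩
    rw [haN, sum_add_const_add, (mem_strictMonoTuples.1 ha).1] at hcard
    have hlast : μ.rowLen (p - 1) + 0 = a ⟨0, hp⟩ + N := congrFun haN ⟨0, hp⟩
    exact ⟨by omega, by omega⟩

theorem PwordTail_eq_sum_strictMonoTuples (hp : 0 < p) (N k : ℕ) :
    PwordTail (N * p + k) p N = ∑ a ∈ strictMonoTuples p (k + ∑ i : Fin p, (i : ℕ)),
      ((N * p + k).factorial : ℝ) / (p : ℝ) ^ (N * p + k) *
        ((∏ i : Fin p, ((i : ℕ).factorial : ℝ)) * (binomDet a : ℝ) ^ 2) /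
          ∏ i, ((a i + N).factorial : ℝ) := by
  have hdiagram (a : strictMonoTuples p (k + ∑ i : Fin p, (i : ℕ))) :
      ∃ μ : YoungDiagram, μ.rowLen p = 0 ∧ shiftedParts p μ = fun i => a.1 i + N :=
    exists_shiftedParts_eq ((mem_strictMonoTuples.1 a.2).2.add_const N)
  choose diagram hrow hparts using hdiagram
  have hinj : Function.Injective diagram := fun a b hab => Subtype.ext <| funext fun i =>
    Nat.add_right_cancel (congrFun ((hparts a).symm.trans (hab ▸ hparts b)) i)
  rw [PwordTail, ← hinj.tsum_eq, tsum_fintype,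
    ← Finset.sum_coe_sort (strictMonoTuples _ _)]
  · refine Finset.sum_congr rfl fun a _ => ?_
    have hmem := (card_eq_and_le_rowLen_iff hp (hrow a) N k).2 ⟨a, a.2, hparts a⟩
    rw [if_pos hmem, ← hmem.1, Pword_card_eq (hrow a), hparts, binomDet_add_const]
  · intro μ hsupp
    obtain ⟨hmem, hP⟩ := ite_ne_right_iff.1 hsupp
    have hμ : μ.rowLen p = 0 := not_imp_comm.1 (Pword_eq_zero · _) hP
    obtain ⟨a, ha, haN⟩ := (card_eq_and_le_rowLen_iff hp hμ N k).1 hmem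
    exact ⟨⟨a, ha⟩, shiftedParts_injOn (hrow _) hμ ((hparts _).trans haN.symm)⟩

end TailProbability

section Asymptotics

lemma tendsto_factorial_add_div (a : ℕ) :
    Tendsto (fun N : ℕ => ((a + N).factorial : ℝ) / (N.factorial * (N : ℝ) ^ a)) atTop (𝓝 1) := by
  induction a with
  | zero =>
    refine tendsto_const_nhds.congr fun N => ?_
    rw [zero_add, pow_zero, mul_one, div_self (Nat.cast_ne_zero.2 N.factorial_ne_zero)]
  | succ a ih =>
    have hfactor : Tendsto (fun N : ℕ => 1 + ((a : ℝ) + 1) / N) atTop (𝓝 1) := by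
      simpa using tendsto_const_nhds.add (tendsto_const_div_atTop_nhds_zero_nat ((a : ℝ) + 1))
    refine (mul_one (1 : ℝ) ▸ ih.mul hfactor).congr' ?_
    filter_upwards [eventually_gt_atTop 0] with N hN
    rw [show a + 1 + N = (a + N) + 1 by ring, Nat.factorial_succ]
    push_cast
    field_simp
    ring

lemma stirlingSeq_mul_div_pow {N : ℕ} (hN : 0 < N) (n : ℕ) :
    Stirling.stirlingSeq (N * (n + 1)) / Stirling.stirlingSeq N ^ (n + 1) *
        (√((n + 1 : ℕ) : ℝ) / √2 ^ n) =
      √(N : ℝ) ^ n * (((N * (n + 1)).factorial : ℝ) /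
        (((n + 1 : ℕ) : ℝ) ^ (N * (n + 1)) * (N.factorial : ℝ) ^ (n + 1))) := by
  have hsqrt : √(2 * ((N * (n + 1) : ℕ) : ℝ)) = √2 * √(N : ℝ) * √((n + 1 : ℕ) : ℝ) := by
    rw [Nat.cast_mul, ← mul_assoc, Real.sqrt_mul (by positivity), Real.sqrt_mul (by positivity)]
  have hpow : (((N * (n + 1) : ℕ) : ℝ) / Real.exp 1) ^ (N * (n + 1)) =
      (((N : ℝ) / Real.exp 1) ^ N) ^ (n + 1) * ((n + 1 : ℕ) : ℝ) ^ (N * (n + 1)) := by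
    rw [← pow_mul, ← mul_pow, Nat.cast_mul, mul_div_right_comm]
  have hbase : ((N : ℝ) / Real.exp 1) ^ N ≠ 0 := by positivity
  have hsqrtN : √(N : ℝ) ≠ 0 := by positivity
  have hsqrtn : √((n + 1 : ℕ) : ℝ) ≠ 0 := by positivity
  simp only [Stirling.stirlingSeq]
  rw [hsqrt, hpow, Real.sqrt_mul zero_le_two]
  generalize ((N : ℝ) / Real.exp 1) ^ N = base at hbase ⊢
  rw [div_pow, mul_pow, mul_pow]
  field_simp
  ring

lemma tendsto_sqrt_pow_mul_factorial_mul_div (n : ℕ) :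
    Tendsto (fun N : ℕ => √(N : ℝ) ^ n * (((N * (n + 1)).factorial : ℝ) /
        (((n + 1 : ℕ) : ℝ) ^ (N * (n + 1)) * (N.factorial : ℝ) ^ (n + 1))))
      atTop (𝓝 (√((n + 1 : ℕ) : ℝ) / √(2 * π) ^ n)) := by
  have hmul : Tendsto (fun N : ℕ => N * (n + 1)) atTop atTop :=
    tendsto_id.atTop_mul_const' n.succ_pos
  have hstirling := Stirling.tendsto_stirlingSeq_sqrt_pi
  have hlim := ((hstirling.comp hmul).div (hstirling.pow (n + 1)) (by positivity)).mul_const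
    (√((n + 1 : ℕ) : ℝ) / √2 ^ n)
  have hconst : √π / √π ^ (n + 1) * (√((n + 1 : ℕ) : ℝ) / √2 ^ n) =
      √((n + 1 : ℕ) : ℝ) / √(2 * π) ^ n := by
    rw [Real.sqrt_mul zero_le_two, mul_pow, pow_succ]
    field_simp
  rw [hconst] at hlim
  refine hlim.congr' ?_
  filter_upwards [eventually_gt_atTop 0] with N hN
  exact stirlingSeq_mul_div_pow hN n

lemma rpow_natCast_div_two {x : ℝ} (hx : 0 ≤ x) (n : ℕ) : x ^ ((n : ℝ) / 2) = √x ^ n := by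
  rw [Real.sqrt_eq_rpow, ← Real.rpow_natCast, ← Real.rpow_mul hx, one_div_mul_eq_div]

lemma rpow_succ_sq_sub_one_div_two {x : ℝ} (hx : 0 < x) (n : ℕ) :
    x ^ ((((n + 1 : ℕ) : ℝ) ^ 2 - 1) / 2) = √x ^ n * x ^ (∑ i : Fin (n + 1), (i : ℕ)) := by
  have hsum : ((∑ i : Fin (n + 1), (i : ℕ) : ℕ) : ℝ) * 2 = (n + 1) * n := by
    exact_mod_cast Finset.sum_range (fun i => i) ▸ Finset.sum_range_id_mul_two (n + 1)
  rw [← rpow_natCast_div_two hx.le, ← Real.rpow_natCast x, ← Real.rpow_add hx]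
  congr 1
  push_cast at hsum ⊢
  linarith

lemma prod_factorial_add_div {p : ℕ} (a : Fin p → ℕ) (N : ℕ) :
    ∏ i, (((a i + N).factorial : ℝ) / (N.factorial * (N : ℝ) ^ a i)) =
      (∏ i, ((a i + N).factorial : ℝ)) / ((N.factorial : ℝ) ^ p * (N : ℝ) ^ ∑ i, a i) := by
  rw [Finset.prod_div_distrib, Finset.prod_mul_distrib, Finset.prod_const,
    Finset.prod_pow_eq_pow_sum, Finset.card_univ, Fintype.card_fin]

/-- Replacing `(N * p + k)!` and `(a i + N)!` by `(N * p)!` and `N!` costs a factor `N ^ ∑ i`; with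
the Stirling factor `N ^ ((p - 1) / 2)` this makes up the exponent `(p ^ 2 - 1) / 2`. -/
theorem tendsto_rpow_mul_factorial_div_prod_factorial {p : ℕ} (hp : 0 < p) {k : ℕ}
    {a : Fin p → ℕ} (ha : ∑ i, a i = k + ∑ i : Fin p, (i : ℕ)) :
    Tendsto (fun N : ℕ => (N : ℝ) ^ (((p : ℝ) ^ 2 - 1) / 2) *
        (((N * p + k).factorial : ℝ) / (p : ℝ) ^ (N * p + k) / ∏ i, ((a i + N).factorial : ℝ)))
      atTop (𝓝 (√(p : ℝ) / (2 * π) ^ (((p : ℝ) - 1) / 2))) := by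
  obtain ⟨n, rfl⟩ := Nat.exists_eq_add_one.2 hp
  have hmul : Tendsto (fun N : ℕ => N * (n + 1)) atTop atTop :=
    tendsto_id.atTop_mul_const' n.succ_pos
  have hprod := tendsto_finsetProd Finset.univ fun i _ => tendsto_factorial_add_div (a i)
  rw [Finset.prod_const_one] at hprod
  have hlim := ((tendsto_sqrt_pow_mul_factorial_mul_div n).mul
    ((tendsto_factorial_add_div k).comp hmul)).div hprod one_ne_zero
  have hexponent : (((n + 1 : ℕ) : ℝ) - 1) / 2 = (n : ℝ) / 2 := by push_cast; ring
  rw [mul_one, div_one, ← rpow_natCast_div_two (by positivity), ← hexponent] at hlim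
  refine hlim.congr' ?_
  filter_upwards [eventually_gt_atTop 0] with N hN
  have hfacmul : ((N * (n + 1)).factorial : ℝ) ≠ 0 :=
    Nat.cast_ne_zero.2 (Nat.factorial_ne_zero _)
  have hfacs := prod_factorial_ne_zero fun i => a i + N
  simp only [Pi.div_apply, Function.comp_apply]
  rw [prod_factorial_add_div, ha, rpow_succ_sq_sub_one_div_two (Nat.cast_pos.2 hN),
    add_comm k, pow_add (N : ℝ), pow_add ((n + 1 : ℕ) : ℝ), Nat.cast_mul, mul_pow]
  generalize (∏ i, ((a i + N).factorial : ℝ)) = facs at hfacs ⊢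
  field_simp

lemma isEquivalent_const_mul_rpow_neg {f : ℕ → ℝ} {s C : ℝ} (hC : C ≠ 0)
    (h : Tendsto (fun N : ℕ => (N : ℝ) ^ s * f N) atTop (𝓝 C)) :
    Asymptotics.IsEquivalent atTop f fun N : ℕ => C * (N : ℝ) ^ (-s) := by
  refine Asymptotics.isEquivalent_of_tendsto_one ((div_self hC ▸ h.div_const C).congr fun N => ?_)
  rw [Pi.div_apply, Real.rpow_neg N.cast_nonneg, ← div_eq_mul_inv, div_div_eq_mul_div,
    mul_comm (f N)]

end Asymptotics

section ChiSquare

open ProbabilityTheory Finset.HasAntidiagonal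

lemma pochRe_succ (x : ℝ) (k : ℕ) : pochRe x (k + 1) = pochRe x k * (x + k) :=
  Finset.prod_range_succ _ _

lemma sum_antidiagonal_choose_mul_pochRe (x y : ℝ) (k : ℕ) :
    ∑ ij ∈ antidiagonal k, (k.choose ij.1 : ℝ) * (pochRe x ij.1 * pochRe y ij.2) =
      pochRe (x + y) k := by
  induction k with
  | zero => simp [pochRe]
  | succ k ih =>
    rw [Finset.sum_antidiagonal_choose_succ_mul (fun i j => pochRe x i * pochRe y j),
      pochRe_succ, ← ih, Finset.sum_mul, ← Finset.sum_add_distrib]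
    refine Finset.sum_congr rfl fun ij hij => ?_
    obtain rfl := mem_antidiagonal.1 hij
    rw [← Nat.choose_symm_add, pochRe_succ, pochRe_succ]
    push_cast
    ring

lemma Gamma_natCast_add_one_half (j : ℕ) :
    Real.Gamma (j + 1 / 2) = √π * pochRe (1 / 2) j := by
  induction j with
  | zero => rw [Nat.cast_zero, zero_add, Real.Gamma_one_half_eq]; simp [pochRe]
  | succ j ih =>
    rw [Nat.cast_succ, add_right_comm, Real.Gamma_add_one (by positivity), ih, pochRe_succ]
    ring

lemma integrable_half_sq_pow_gaussianReal (j : ℕ) :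
    Integrable (fun x : ℝ => (x ^ 2 / 2) ^ j) (gaussianReal 0 1) := by
  have hpow := (memLp_id_gaussianReal' (μ := 0) (v := 1) ((2 * j : ℕ) : ENNReal)
    (ENNReal.natCast_ne_top _)).integrable_norm_pow'
  refine (hpow.div_const (2 ^ j)).congr (Eventually.of_forall fun x => ?_)
  simp only [id, Real.norm_eq_abs, pow_mul, sq_abs, div_pow]

lemma integral_Ioi_pow_mul_exp_neg_half_sq (j : ℕ) :
    ∫ x in Set.Ioi (0 : ℝ), x ^ ((2 * j : ℕ) : ℝ) * Real.exp (-(1 / 2) * x ^ (2 : ℝ)) =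
      2 ^ j * √2 * (√π * pochRe (1 / 2) j) / 2 := by
  have hexponent : (((2 * j : ℕ) : ℝ) + 1) / 2 = j + 1 / 2 := by push_cast; ring
  have hscale : (1 / 2 : ℝ) ^ (-((j : ℝ) + 1 / 2)) = 2 ^ j * √2 := by
    rw [one_div, Real.inv_rpow zero_le_two, Real.rpow_neg zero_le_two, inv_inv,
      Real.rpow_add zero_lt_two, Real.rpow_natCast, ← one_div, ← Real.sqrt_eq_rpow]
  rw [integral_rpow_mul_exp_neg_mul_rpow zero_lt_two
      (neg_one_lt_zero.trans_le (Nat.cast_nonneg _)) one_half_pos,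
    neg_div, hexponent, hscale, Gamma_natCast_add_one_half]
  ring

lemma integral_half_sq_pow_gaussianReal (j : ℕ) :
    ∫ x : ℝ, (x ^ 2 / 2) ^ j ∂(gaussianReal 0 1) = pochRe (1 / 2) j := by
  have hdensity (x : ℝ) : gaussianPDFReal 0 1 x • (x ^ 2 / 2) ^ j =
      (√(2 * π))⁻¹ * (2 ^ j)⁻¹ *
        (|x| ^ ((2 * j : ℕ) : ℝ) * Real.exp (-(1 / 2) * |x| ^ (2 : ℝ))) := by
    have hexponent : -(x - 0) ^ 2 / (2 * ((1 : NNReal) : ℝ)) = -(1 / 2) * x ^ 2 := by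
      push_cast; ring
    rw [gaussianPDFReal, hexponent, Real.rpow_natCast, Real.rpow_two, sq_abs, pow_mul, sq_abs,
      div_pow, NNReal.coe_one, mul_one, smul_eq_mul]
    ring
  simp_rw [integral_gaussianReal_eq_integral_smul one_ne_zero, hdensity]
  rw [integral_const_mul, integral_comp_abs
      (f := fun y : ℝ => y ^ ((2 * j : ℕ) : ℝ) * Real.exp (-(1 / 2) * y ^ (2 : ℝ))),
    integral_Ioi_pow_mul_exp_neg_half_sq, Real.sqrt_mul zero_le_two]
  field_simp

lemma half_sum_sq_pow_succ {m : ℕ} (k : ℕ) (x : Fin (m + 1) → ℝ) :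
    ((∑ i, x i ^ 2) / 2) ^ k = ∑ ij ∈ antidiagonal k, (k.choose ij.1 : ℝ) *
      ((x 0 ^ 2 / 2) ^ ij.1 * ((∑ i, Fin.tail x i ^ 2) / 2) ^ ij.2) := by
  rw [Fin.sum_univ_succ, add_div, (Commute.all _ _).add_pow']
  simp only [nsmul_eq_mul, Fin.tail]

lemma integrable_half_sum_sq_pow_pi_gaussianReal (m k : ℕ) :
    Integrable (fun x : Fin m → ℝ => ((∑ i, x i ^ 2) / 2) ^ k)
      (Measure.pi fun _ : Fin m => gaussianReal 0 1) := by
  induction m generalizing k with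
  | zero => simp
  | succ m ih =>
    simp_rw [half_sum_sq_pow_succ]
    have hsplit := measurePreserving_piFinSuccAbove (fun _ : Fin (m + 1) => gaussianReal 0 1) 0
    exact integrable_finsetSum _ fun ij _ => hsplit.integrable_comp_of_integrable
      (((integrable_half_sq_pow_gaussianReal ij.1).mul_prod (ih ij.2)).const_mul _)

lemma chiHalfMoment_succ (m k : ℕ) :
    chiHalfMoment (m + 1) k = ∑ ij ∈ antidiagonal k,
      (k.choose ij.1 : ℝ) * (pochRe (1 / 2) ij.1 * chiHalfMoment m ij.2) := by
  let γ := gaussianReal 0 1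
  let γm := Measure.pi fun _ : Fin m => gaussianReal 0 1
  let term (ij : ℕ × ℕ) (z : ℝ × (Fin m → ℝ)) : ℝ :=
    k.choose ij.1 * ((z.1 ^ 2 / 2) ^ ij.1 * ((∑ i, z.2 i ^ 2) / 2) ^ ij.2)
  have hterm (ij : ℕ × ℕ) : Integrable (term ij) (γ.prod γm) :=
    ((integrable_half_sq_pow_gaussianReal ij.1).mul_prod
      (integrable_half_sum_sq_pow_pi_gaussianReal m ij.2)).const_mul _
  calc chiHalfMoment (m + 1) k
    _ = ∫ z, ∑ ij ∈ antidiagonal k, term ij z ∂(γ.prod γm) := by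
      simp_rw [chiHalfMoment, half_sum_sq_pow_succ]
      exact (measurePreserving_piFinSuccAbove (fun _ => gaussianReal 0 1) 0).integral_comp'
        (fun z => ∑ ij ∈ antidiagonal k, term ij z)
    _ = ∑ ij ∈ antidiagonal k, ∫ z, term ij z ∂(γ.prod γm) :=
      integral_finsetSum _ fun ij _ => hterm ij
    _ = _ := Finset.sum_congr rfl fun ij _ => by
      rw [integral_const_mul, integral_prod_mul (fun x : ℝ => (x ^ 2 / 2) ^ ij.1)
        (fun y : Fin m → ℝ => ((∑ i, y i ^ 2) / 2) ^ ij.2), integral_half_sq_pow_gaussianReal,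
        chiHalfMoment]

theorem chiHalfMoment_eq_pochRe (m k : ℕ) : chiHalfMoment m k = pochRe (m / 2) k := by
  induction m generalizing k with
  | zero => cases k <;> simp [chiHalfMoment, pochRe, Finset.prod_range_succ']
  | succ m ih =>
    simp_rw [chiHalfMoment_succ, ih, sum_antidiagonal_choose_mul_pochRe]
    congr 1
    push_cast
    ring

lemma pochRe_natCast_succ (n k : ℕ) : pochRe (n + 1) k = k.factorial * ((n + k).choose k : ℝ) := by
  rw [← Nat.cast_mul, ← Nat.ascFactorial_eq_factorial_mul_choose, Nat.ascFactorial_eq_prod_range]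
  push_cast
  rfl

theorem chiHalfMoment_two_mul {n : ℕ} (hn : 0 < n) (k : ℕ) :
    chiHalfMoment (2 * n) k = k.factorial * ((n - 1 + k).choose k : ℝ) := by
  have hhalf : ((2 * n : ℕ) : ℝ) / 2 = (n - 1 : ℕ) + 1 := by
    rw [Nat.cast_mul, Nat.cast_two, mul_div_cancel_left₀ _ two_ne_zero, Nat.cast_pred hn,
      sub_add_cancel]
  rw [chiHalfMoment_eq_pochRe, hhalf, pochRe_natCast_succ]

end ChiSquare

section TailLimit

lemma prod_Icc_factorial_sub (p : ℕ) :
    ∏ j ∈ Finset.Icc 1 p, ((p - j).factorial : ℝ) = ∏ i : Fin p, ((i : ℕ).factorial : ℝ) := by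
  rw [← Finset.prod_range (fun i => (i.factorial : ℝ)), ← Finset.prod_range_reflect,
    Finset.range_eq_Ico, ← Finset.Ico_add_one_right_eq_Icc,
    ← Finset.prod_Ico_add' (fun j => ((p - j).factorial : ℝ)) 0 p 1]
  simp only [Nat.sub_sub, add_comm 1]

theorem tendsto_rpow_mul_PwordTail {p : ℕ} (hp : 0 < p) (k : ℕ) :
    Tendsto (fun N : ℕ => (N : ℝ) ^ (((p : ℝ) ^ 2 - 1) / 2) * PwordTail (N * p + k) p N) atTop
      (𝓝 (√p * (∏ j ∈ Finset.Icc 1 p, ((p - j).factorial : ℝ)) /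
        (2 * π) ^ (((p : ℝ) - 1) / 2) * ((p ^ 2 - 1 + k).choose k : ℝ))) := by
  have hsq : ∑ a ∈ strictMonoTuples p (k + ∑ i : Fin p, (i : ℕ)), (binomDet a : ℝ) ^ 2 =
      ((p ^ 2 - 1 + k).choose k : ℝ) := by
    exact_mod_cast congrArg (Int.cast (R := ℝ)) (sum_binomDet_sq hp k)
  have hlim := tendsto_finsetSum (strictMonoTuples p (k + ∑ i : Fin p, (i : ℕ))) fun a ha =>
    (tendsto_rpow_mul_factorial_div_prod_factorial hp (mem_strictMonoTuples.1 ha).1).mul_const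
      ((∏ i : Fin p, ((i : ℕ).factorial : ℝ)) * (binomDet a : ℝ) ^ 2)
  rw [← Finset.mul_sum, ← Finset.mul_sum, hsq, ← mul_assoc, div_mul_eq_mul_div,
    ← prod_Icc_factorial_sub] at hlim
  refine hlim.congr fun N => ?_
  rw [PwordTail_eq_sum_strictMonoTuples hp, Finset.mul_sum, prod_Icc_factorial_sub]
  exact Finset.sum_congr rfl fun a _ => by ring

lemma tail_constant_ne_zero {p : ℕ} (hp : 0 < p) (k : ℕ) :
    √p * (∏ j ∈ Finset.Icc 1 p, ((p - j).factorial : ℝ)) /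
      (2 * π) ^ (((p : ℝ) - 1) / 2) * ((p ^ 2 - 1 + k).choose k : ℝ) ≠ 0 := by
  have hchoose : 0 < (p ^ 2 - 1 + k).choose k := Nat.choose_pos (Nat.le_add_left _ _)
  positivity

end TailLimit

/-- asymptotics of `P^{Np+k,p}(λ_p ≥ N)` as `N → ∞`, in terms of
the `k`-th moment of `½ χ²_{2p²}`. -/
theorem statement3 (p k : ℕ) (hp : 1 ≤ p) :
    Filter.Tendsto
      (fun N : ℕ => (N : ℝ) ^ (((p : ℝ) ^ 2 - 1) / 2) * PwordTail (N * p + k) p N)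
      Filter.atTop
      (nhds (Real.sqrt p * (∏ j ∈ Finset.Icc 1 p, (Nat.factorial (p - j) : ℝ)) /
        ((2 * Real.pi) ^ (((p : ℝ) - 1) / 2) * (Nat.factorial k : ℝ)) *
        chiHalfMoment (2 * p ^ 2) k)) ∧
    Asymptotics.IsEquivalent Filter.atTop
      (fun N : ℕ => PwordTail (N * p + k) p N)
      (fun N : ℕ =>
        (Real.sqrt p * (∏ j ∈ Finset.Icc 1 p, (Nat.factorial (p - j) : ℝ)) /
          (2 * Real.pi) ^ (((p : ℝ) - 1) / 2) *
          (Nat.choose (p ^ 2 - 1 + k) k : ℝ)) *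
        (N : ℝ) ^ (-(((p : ℝ) ^ 2 - 1) / 2))) := by
  have hlim := tendsto_rpow_mul_PwordTail hp k
  refine ⟨?_, isEquivalent_const_mul_rpow_neg (tail_constant_ne_zero hp k) hlim⟩
  rw [chiHalfMoment_two_mul (pow_pos hp 2)]
  convert hlim using 2
  field_simp

end
end
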